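/- Let f be a homeomorphism of the open annulus 𝔸 isotopic to the identity and satisfying the intersection property, and let F be a lift of f to ℝ². Suppose Rot_weak(F) ⊂ [−q+2, q−2] for some integer q ≥ 2. Then there exists an oriented essential line γ in 𝔸 joining S to N that lifts to an essential line Γ in ℝ² satisfying T^{−q}(Γ) < F(Γ) < T^{q}(Γ). -/

import Mathlib

open Filter Topology Set

noncomputable section

/-- The plane ℝ². -/
abbrev Plane := ℝ × ℝ

/-- The open annulus 𝔸 = ℝ/ℤ × ℝ. -/
abbrev Ann := AddCircle (1 : ℝ) × ℝ

/-- The covering map π : ℝ² → 𝔸, (x,y) ↦ (x + ℤ, y). -/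
def prj : Plane → Ann := fun p => ((p.1 : AddCircle (1 : ℝ)), p.2)

/-- The deck transformation T^k : ℝ² → ℝ², (x,y) ↦ (x + k, y). -/
def Tr (k : ℤ) : Plane → Plane := fun p => (p.1 + (k : ℝ), p.2)

/-- `F` is a lift of `f` to the universal cover ℝ² of the annulus. -/
def IsLift (f : Ann ≃ₜ Ann) (F : Plane ≃ₜ Plane) : Prop :=
  ∀ p : Plane, prj (F p) = f (prj p)

/-- `f` is isotopic to the identity: there is a continuous family of homeomorphisms
joining the identity to `f`. -/
def IsotopicToId (f : Ann ≃ₜ Ann) : Prop :=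
  ∃ H : ℝ → Ann → Ann,
    Continuous (fun q : ℝ × Ann => H q.1 q.2) ∧
    (∀ t : ℝ, ∃ h : Ann ≃ₜ Ann, ∀ z, H t z = h z) ∧
    (∀ z, H 0 z = z) ∧ (∀ z, H 1 z = f z)

/-- An essential circle in 𝔸: a simple closed curve which is not null-homotopic. -/
def IsEssentialCircle (c : Set Ann) : Prop :=
  ∃ φ : C(AddCircle (1 : ℝ), Ann), Function.Injective φ ∧ Set.range φ = c ∧
    ¬ ∃ pt : Ann, φ.Homotopic (ContinuousMap.const _ pt)

/-- `f` has the intersection property: every essential circle meets its image. -/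
def IntersectionProperty (f : Ann → Ann) : Prop :=
  ∀ c : Set Ann, IsEssentialCircle c → (c ∩ f '' c).Nonempty

/-- `z` is a positively recurrent point of `g`: some subsequence of the forward orbit
of `z` converges to `z`. -/
def PosRec {X : Type*} [TopologicalSpace X] (g : X → X) (z : X) : Prop :=
  ∃ φ : ℕ → ℕ, StrictMono φ ∧ Tendsto (fun k => g^[φ k] z) atTop (𝓝 z)

/-- The positively recurrent point `z` has rotation number `ρ` for the lift `F` of `f`. -/
def HasRotNum (f : Ann → Ann) (F : Plane → Plane) (z : Ann) (ρ : ℝ) : Prop :=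
  PosRec f z ∧
    ∀ zt : Plane, prj zt = z →
      ∀ φ : ℕ → ℕ, StrictMono φ →
        Tendsto (fun k => f^[φ k] z) atTop (𝓝 z) →
        Tendsto (fun k => ((F^[φ k] zt).1 - zt.1) / (φ k : ℝ)) atTop (𝓝 ρ)

/-- The rotation set Rot(F): the set of rotation numbers of positively recurrent
points of `f`. -/
def Rot (f : Ann → Ann) (F : Plane → Plane) : Set ℝ := {ρ | ∃ z, HasRotNum f F z ρ}

/-- The region `L(Γ)` of the plane on the left (west) of a line `Γ` (as a subset of ℝ²):
points lying in the connected component of the complement of `Γ` containing all far-west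
points of the horizontal axis. -/
def Lset (Γ : Set Plane) : Set Plane :=
  {p | ∃ s : ℝ, ∀ x ≤ s, p ∈ connectedComponentIn Γᶜ ((x, 0) : Plane)}

/-- The region `R(Γ)` of the plane on the right (east) of a line `Γ`. -/
def Rset (Γ : Set Plane) : Set Plane :=
  {p | ∃ s : ℝ, ∀ x ≥ s, p ∈ connectedComponentIn Γᶜ ((x, 0) : Plane)}

/-- The relation `Γ₁ < Γ₂` on (essential, oriented from south to north) lines:
`Cl(L(Γ₁)) ⊆ L(Γ₂)`. -/
def lineLT (Γ₁ Γ₂ : Set Plane) : Prop := closure (Lset Γ₁) ⊆ Lset Γ₂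

/-- An essential line in ℝ², oriented from south to north: a properly embedded copy of ℝ
whose second coordinate tends to ±∞ at ±∞. -/
def IsEssLinePlane (Γ : ℝ → Plane) : Prop :=
  Continuous Γ ∧ Function.Injective Γ ∧ IsProperMap Γ ∧
    Tendsto (fun t => (Γ t).2) atTop atTop ∧ Tendsto (fun t => (Γ t).2) atBot atBot

/-- An essential line in the annulus 𝔸: a properly embedded simple path joining one end
to the other. -/
def IsEssLineAnn (γ : ℝ → Ann) : Prop :=
  Continuous γ ∧ Function.Injective γ ∧ IsProperMap γ ∧
    ((Tendsto (fun t => (γ t).2) atTop atTop ∧ Tendsto (fun t => (γ t).2) atBot atBot) ∨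
     (Tendsto (fun t => (γ t).2) atTop atBot ∧ Tendsto (fun t => (γ t).2) atBot atTop))

/-- An oriented essential line in 𝔸 joining the lower end S to the upper end N. -/
def IsEssLineAnnSN (γ : ℝ → Ann) : Prop :=
  Continuous γ ∧ Function.Injective γ ∧ IsProperMap γ ∧
    Tendsto (fun t => (γ t).2) atTop atTop ∧ Tendsto (fun t => (γ t).2) atBot atBot

/-- The weak rotation set of `F` relative to a compact set `K` of the annulus,
as a subset of [-∞,+∞]. -/
def RotWeakK (F : Plane → Plane) (K : Set Ann) : Set EReal :=
  {r | ∃ zs : ℕ → Plane, ∃ ns : ℕ → ℕ,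
      (∀ k, prj (zs k) ∈ K) ∧ (∀ k, prj (F^[ns k] (zs k)) ∈ K) ∧
      (∀ k, 0 < ns k) ∧ Tendsto ns atTop atTop ∧
      Tendsto (fun k => ((((F^[ns k] (zs k)).1 - (zs k).1) / (ns k : ℝ) : ℝ) : EReal))
        atTop (𝓝 r)}

/-- The weak rotation set of `F`: union of the `RotWeakK F K` over all compact `K ⊆ 𝔸`. -/
def RotWeak (F : Plane → Plane) : Set EReal :=
  ⋃ K ∈ {K : Set Ann | IsCompact K}, RotWeakK F K

/-! The bound on the weak rotation set yields a height function: a continuous `h : ℝ² → ℝ` with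
`h ∘ T = h + 1` and `a - ε ≤ h ∘ F - h ≤ b + ε`. It is the supremum along the orbits of `F` of
`x - w(y)` minus a drift, where the weight `w` absorbs the displacements that `Rot_weak` does not
control.

Any essential line `Γ` contained in a thin slab `0 < h < δ` then solves the problem, because for
`m < a` and `b < n` the maps `T⁻ᵐ ∘ F` and `F⁻¹ ∘ Tⁿ` raise `h` by at least `δ`. To find such a
line, rescale the plane so that `h` hardly varies on balls of radius 1, colour the vertices of a
triangular lattice according to whether they lie on the eastern side of `{h ≤ δ / 2}`, and follow
the interface of the colouring.
-/

/-! ### Deck transformations and lifts -/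

/-- The generator `T : (x, y) ↦ (x + 1, y)` of the deck transformation group, as an element of
the group of homeomorphisms of the plane. -/
def deck : Plane ≃ₜ Plane := (Homeomorph.addRight (1 : ℝ)).prodCongr (Homeomorph.refl ℝ)

lemma deck_apply (p : Plane) : deck p = (p.1 + 1, p.2) := rfl

lemma coe_deck_zpow (n : ℤ) : ⇑(deck ^ n) = Tr n := by
  funext p
  induction n generalizing p with
  | zero => simp [Tr]
  | succ n ih =>
    rw [zpow_add_one, Homeomorph.mul_apply, ih, deck_apply]
    simp only [Tr, Int.cast_add, Int.cast_natCast, Int.cast_one]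
    ring_nf
  | pred n ih =>
    have hinv : (deck⁻¹ : Plane ≃ₜ Plane) p = (p.1 - 1, p.2) := rfl
    rw [zpow_sub_one, Homeomorph.mul_apply, ih, hinv]
    simp only [Tr, Int.cast_sub, Int.cast_neg, Int.cast_natCast, Int.cast_one]
    ring_nf

lemma continuous_prj : Continuous prj :=
  ((AddCircle.continuous_mk' (1 : ℝ)).comp continuous_fst).prodMk continuous_snd

lemma prj_deck (p : Plane) : prj (deck p) = prj p := by
  simp [prj, deck_apply]

lemma exists_Tr_eq_of_prj_eq {p q : Plane} (h : prj p = prj q) : ∃ n : ℤ, p = Tr n q := by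
  obtain ⟨n, hn⟩ := QuotientAddGroup.eq_iff_sub_mem.1 (congrArg Prod.fst h)
  have hsnd : (prj p).2 = (prj q).2 := congrArg Prod.snd h
  refine ⟨n, Prod.ext ?_ hsnd⟩
  simp only [zsmul_eq_mul, mul_one] at hn
  simp only [Tr]
  linarith

lemma commute_deck_iff {G : Plane ≃ₜ Plane} : Commute G deck ↔ ∀ p, G (deck p) = deck (G p) :=
  ⟨fun h p ↦ DFunLike.congr_fun h.eq p, fun h ↦ Homeomorph.ext h⟩

lemma add_intCast_of_deck {h : Plane → ℝ} (hh : ∀ p, h (deck p) = h p + 1) (n : ℤ) (p : Plane) :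
    h (Tr n p) = h p + n := by
  have hper : Function.Periodic (fun x ↦ h (x, p.2) - x) 1 := fun x ↦ by
    have : h (x + 1, p.2) = h (x, p.2) + 1 := hh (x, p.2)
    simp only [this, add_sub_add_right_eq_sub]
  have hn : h (Tr n p) - (p.1 + n) = h p - p.1 := by simpa [Tr] using hper.int_mul n p.1
  linarith

lemma exists_bound_of_deck_invariant {k : Plane → ℝ} (hk : Continuous k)
    (hT : ∀ p, k (deck p) = k p) (m : ℝ) : ∃ C, ∀ p : Plane, |p.2| ≤ m → |k p| ≤ C := by
  obtain ⟨C, hC⟩ := (isCompact_Icc.prod isCompact_Icc :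
    IsCompact (Icc (0 : ℝ) 1 ×ˢ Icc (-m) m)).exists_bound_of_continuousOn hk.continuousOn
  refine ⟨C, fun p hp ↦ ?_⟩
  have hper : Function.Periodic (fun x ↦ k (x, p.2)) 1 := fun x ↦ hT (x, p.2)
  obtain ⟨x, hx, hxp⟩ := hper.exists_mem_Ico₀ one_pos p.1
  have hxp : k p = k (x, p.2) := hxp
  exact hxp ▸ hC (x, p.2) ⟨⟨hx.1, hx.2.le⟩, abs_le.1 hp⟩

lemma sub_eq_sub_of_coe_eq {X : Type*} [TopologicalSpace X] [PreconnectedSpace X] {g₁ g₂ : X → ℝ}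
    (h₁ : Continuous g₁) (h₂ : Continuous g₂)
    (h : ∀ x, (g₁ x : AddCircle (1 : ℝ)) = (g₂ x : AddCircle (1 : ℝ))) (x y : X) :
    g₁ x - g₂ x = g₁ y - g₂ y := by
  refine isPreconnected_univ.constant_of_mapsTo
    (T := (AddSubgroup.zmultiples (1 : ℝ) : Set ℝ)) ?_ (h₁.sub h₂).continuousOn
    (fun x _ ↦ QuotientAddGroup.eq_iff_sub_mem.1 (h x)) (mem_univ x) (mem_univ y)
  exact ⟨inferInstanceAs (DiscreteTopology (AddSubgroup.zmultiples (1 : ℝ)))⟩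

/-- The isotopy is lifted by hand to `(s, p) ↦ L (s, p)` on first coordinates: the translation
length `L (s, deck p) - L (s, p)` is then an integer depending continuously on `s`. -/
lemma commute_deck_of_isotopicToId {f : Ann ≃ₜ Ann} {F : Plane ≃ₜ Plane} (hf : IsotopicToId f)
    (hF : IsLift f F) : Commute F deck := by
  obtain ⟨H, hH, -, hH0, hH1⟩ := hf
  let A : C(ℝ × Plane, AddCircle (1 : ℝ)) :=
    ⟨fun q ↦ (H q.1 (prj q.2)).1,
      (hH.comp (continuous_fst.prodMk (continuous_prj.comp continuous_snd))).fst⟩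
  obtain ⟨L, ⟨-, hL⟩, -⟩ := (AddCircle.isCoveringMap_coe (1 : ℝ)).existsUnique_continuousMap_lifts
    A (0 : ℝ × Plane) (0 : ℝ) (by simp [A, hH0, prj])
  have hLA (s : ℝ) (p : Plane) : (L (s, p) : AddCircle (1 : ℝ)) = (H s (prj p)).1 :=
    congrFun hL (s, p)
  have hL0 (p : Plane) : L (0, deck p) - L (0, p) = 1 := by
    have := sub_eq_sub_of_coe_eq (g₁ := fun p ↦ L (0, p)) (g₂ := Prod.fst) (by fun_prop)
      continuous_fst (fun p ↦ by simp [hLA, hH0, prj]) (deck p) p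
    simp only [deck_apply] at this ⊢
    linarith
  have hL1 (p : Plane) : L (1, deck p) - L (1, p) = 1 := by
    refine Eq.trans ?_ (hL0 p)
    exact sub_eq_sub_of_coe_eq (g₁ := fun s ↦ L (s, deck p)) (g₂ := fun s ↦ L (s, p))
      (by fun_prop) (by fun_prop) (fun s ↦ by simp only [hLA, prj_deck]) 1 0
  have hFf (p : Plane) : (((F p).1 : ℝ) : AddCircle (1 : ℝ)) = (f (prj p)).1 :=
    congrArg Prod.fst (hF p)
  refine commute_deck_iff.2 fun p ↦ Prod.ext ?_ ?_
  · have := sub_eq_sub_of_coe_eq (g₁ := fun p ↦ (F p).1) (g₂ := fun p ↦ L (1, p))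
      (by fun_prop) (by fun_prop) (fun p ↦ by rw [hLA, hH1, hFf]) (deck p) p
    rw [deck_apply (F p)]
    linarith [hL1 p]
  · have hsnd (p : Plane) : (F p).2 = (f (prj p)).2 := congrArg (fun a : Ann ↦ a.2) (hF p)
    rw [hsnd, prj_deck, ← hsnd, deck_apply]

/-! ### From the weak rotation set to displacement bounds -/

lemma eventually_rotation_mem {F : Plane → Plane} {U : Set EReal} (hU : IsOpen U)
    (hF : RotWeak F ⊆ U) {K : Set Ann} (hK : IsCompact K) :
    ∀ᶠ n : ℕ in atTop, ∀ z, prj z ∈ K → prj (F^[n] z) ∈ K →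
      ((((F^[n] z).1 - z.1) / (n : ℝ) : ℝ) : EReal) ∈ U := by
  by_contra hcon
  obtain ⟨φ, hφ, hbad⟩ := extraction_of_frequently_atTop
    ((not_eventually.1 hcon).and_eventually (eventually_gt_atTop 0))
  simp only [not_forall, exists_prop] at hbad
  choose hbad hpos using hbad
  choose z hz hFz hzU using hbad
  obtain ⟨r, hrU, ψ, hψ, hr⟩ := hU.isClosed_compl.isCompact.tendsto_subseq hzU
  exact hrU (hF (mem_biUnion hK ⟨z ∘ ψ, φ ∘ ψ, fun k ↦ hz _, fun k ↦ hFz _, fun k ↦ hpos _,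
    hφ.tendsto_atTop.comp hψ.tendsto_atTop, hr⟩))

lemma coe_homeomorph_pow {X : Type*} [TopologicalSpace X] (F : X ≃ₜ X) (n : ℕ) :
    ⇑(F ^ n) = F^[n] := by
  funext x
  induction n generalizing x with
  | zero => rfl
  | succ n ih => rw [pow_succ, Homeomorph.mul_apply, ih, Function.iterate_succ_apply]

lemma exists_fst_sub_fst_bound {G : Plane ≃ₜ Plane} (hG : Commute G deck) (m : ℝ) :
    ∃ C, ∀ p : Plane, |p.2| ≤ m → |(G p).1 - p.1| ≤ C := by
  refine exists_bound_of_deck_invariant (by fun_prop) (fun p ↦ ?_) m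
  rw [commute_deck_iff.1 hG, deck_apply, deck_apply, add_sub_add_right_eq_sub]

lemma isCompact_strip (m : ℝ) : IsCompact {z : Ann | |z.2| ≤ m} := by
  have : {z : Ann | |z.2| ≤ m} = univ ×ˢ Icc (-m) m := by
    ext z
    simp [abs_le]
  rw [this]
  exact isCompact_univ.prod isCompact_Icc

section Displacement

variable {F : Plane ≃ₜ Plane} {a b : ℝ}

lemma eventually_fst_sub_fst_mem (hsub : RotWeak F ⊆ Ioo (a : EReal) b) (m : ℝ) :
    ∀ᶠ n : ℕ in atTop, ∀ z : Plane, |z.2| ≤ m → |((F ^ n) z).2| ≤ m →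
      ((F ^ n) z).1 - z.1 ∈ Icc (a * n) (b * n) := by
  filter_upwards [eventually_rotation_mem isOpen_Ioo hsub (isCompact_strip m),
    eventually_gt_atTop 0] with n hn hpos z hz hFz
  rw [coe_homeomorph_pow] at hFz ⊢
  obtain ⟨h₁, h₂⟩ := hn z hz hFz
  have hpos : (0 : ℝ) < n := Nat.cast_pos.2 hpos
  exact ⟨((lt_div_iff₀ hpos).1 (EReal.coe_lt_coe_iff.1 h₁)).le,
    ((div_lt_iff₀ hpos).1 (EReal.coe_lt_coe_iff.1 h₂)).le⟩

lemma exists_nat_displacement_bound (hF : Commute F deck) (hsub : RotWeak F ⊆ Ioo (a : EReal) b)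
    (m : ℝ) : ∃ C, ∀ (n : ℕ) (z : Plane), |z.2| ≤ m → |((F ^ n) z).2| ≤ m →
      ((F ^ n) z).1 - z.1 ∈ Icc (a * n - C) (b * n + C) := by
  obtain ⟨N, hN⟩ := eventually_atTop.1 (eventually_fst_sub_fst_mem hsub m)
  choose D hD using fun n : ℕ ↦ exists_fst_sub_fst_bound (hF.pow_left n) m
  let C := ∑ n ∈ Finset.range N, (|D n| + |a * n| + |b * n|)
  have hC : 0 ≤ C := Finset.sum_nonneg fun n _ ↦ by positivity
  refine ⟨C, fun n z hz hFz ↦ ?_⟩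
  rcases le_or_gt N n with hn | hn
  · have := hN n hn z hz hFz
    exact ⟨by linarith [this.1], by linarith [this.2]⟩
  · have hCn : |D n| + |a * n| + |b * n| ≤ C :=
      Finset.single_le_sum (f := fun n : ℕ ↦ |D n| + |a * n| + |b * n|)
        (fun n _ ↦ by positivity) (Finset.mem_range.2 hn)
    have := abs_le.1 (hD n z hz)
    exact ⟨by linarith [le_abs_self (D n), le_abs_self (a * n), abs_nonneg (b * n)],
      by linarith [le_abs_self (D n), neg_abs_le (b * n), abs_nonneg (a * n)]⟩

lemma exists_int_displacement_bound (hF : Commute F deck) (hsub : RotWeak F ⊆ Ioo (a : EReal) b)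
    (m : ℝ) : ∃ C, ∀ (n : ℤ) (z : Plane), |z.2| ≤ m → |((F ^ n) z).2| ≤ m →
      ((F ^ n) z).1 - z.1 ≤ max (a * n) (b * n) + C := by
  obtain ⟨C, hC⟩ := exists_nat_displacement_bound hF hsub m
  refine ⟨C, fun n z hz hFz ↦ ?_⟩
  obtain ⟨k, rfl | rfl⟩ := n.eq_nat_or_neg
  · have := (hC k z hz (by simpa using hFz)).2
    simp only [zpow_natCast, Int.cast_natCast]
    linarith [le_max_right (a * k) (b * k)]
  · have hinv : (F ^ k) ((F ^ (-(k : ℤ))) z) = z := by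
      rw [← Homeomorph.mul_apply, zpow_neg, zpow_natCast, mul_inv_cancel, Homeomorph.one_apply]
    have := (hC k _ hFz (hinv.symm ▸ hz)).1
    rw [hinv] at this
    simp only [Int.cast_neg, Int.cast_natCast, mul_neg]
    linarith [le_max_left (-(a * k)) (-(b * k))]

lemma exists_displacement_bound (hF : Commute F deck) (hsub : RotWeak F ⊆ Ioo (a : EReal) b) :
    ∃ w : ℝ → ℝ, Continuous w ∧ ∀ (n : ℤ) (z : Plane),
      ((F ^ n) z).1 - z.1 ≤ max (a * n) (b * n) + w z.2 + w ((F ^ n) z).2 := by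
  let S (y : ℝ) : Set ℝ := {c | 0 ≤ c ∧ ∀ (n : ℤ) (z : Plane), |z.2| ≤ |y| →
    |((F ^ n) z).2| ≤ |y| → ((F ^ n) z).1 - z.1 ≤ max (a * n) (b * n) + c}
  have hconv (y : ℝ) : Convex ℝ (S y) := by
    have hup : IsUpperSet (S y) := fun c d hcd hc ↦
      ⟨hc.1.trans hcd, fun n z hz hFz ↦ (hc.2 n z hz hFz).trans (by gcongr)⟩
    exact hup.ordConnected.convex
  have hloc (y : ℝ) : ∃ c, ∀ᶠ y' in 𝓝 y, c ∈ S y' := by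
    obtain ⟨C, hC⟩ := exists_int_displacement_bound hF hsub (|y| + 1)
    refine ⟨|C|, ?_⟩
    filter_upwards [(continuous_abs.tendsto y).eventually_lt_const (lt_add_one |y|)] with y' hy'
    exact ⟨abs_nonneg C, fun n z hz hFz ↦ (hC n z (hz.trans hy'.le) (hFz.trans hy'.le)).trans
      (by gcongr; exact le_abs_self C)⟩
  obtain ⟨w, hw⟩ := exists_continuous_forall_mem_convex_of_local_const hconv hloc
  refine ⟨w, w.continuous, fun n z ↦ ?_⟩
  rcases le_total |z.2| |((F ^ n) z).2| with h | h
  · linarith [(hw _).2 n z h le_rfl, (hw z.2).1]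
  · linarith [(hw _).2 n z le_rfl h, (hw ((F ^ n) z).2).1]

end Displacement

/-! ### The height function -/

lemma continuous_ciSup_of_locally_dominated {ι X L : Type*} [TopologicalSpace X]
    [ConditionallyCompleteLinearOrder L] [TopologicalSpace L] [ContinuousSup L] {τ : ι → X → L}
    (hτ : ∀ i, Continuous (τ i))
    (hdom : ∀ x₀, ∃ s : Finset ι, ∃ i ∈ s, ∀ᶠ x in 𝓝 x₀, ∀ j ∉ s, τ j x ≤ τ i x) :
    Continuous fun x ↦ ⨆ j, τ j x := by
  refine continuous_iff_continuousAt.2 fun x₀ ↦ ?_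
  obtain ⟨s, i, hi, hs⟩ := hdom x₀
  have hne : Nonempty ι := ⟨i⟩
  refine (Continuous.finset_sup'_apply ⟨i, hi⟩ fun j _ ↦ hτ j).continuousAt.congr ?_
  filter_upwards [hs] with x hx
  have hle (j : ι) : τ j x ≤ s.sup' ⟨i, hi⟩ fun j ↦ τ j x := by
    by_cases hj : j ∈ s
    · exact Finset.le_sup' (fun j ↦ τ j x) hj
    · exact (hx j hj).trans (Finset.le_sup' (fun j ↦ τ j x) hi)
  exact le_antisymm (Finset.sup'_le _ _ fun j _ ↦ le_ciSup ⟨_, forall_mem_range.2 hle⟩ j)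
    (ciSup_le hle)

lemma iSup_orbit_sub_mem_Icc {X : Type*} [TopologicalSpace X] {F : X ≃ₜ X} {φ : X → ℝ} {s : ℤ → ℝ}
    {a b : ℝ} (hs : ∀ n, s (n + 1) - s n ∈ Icc a b)
    (hbdd : ∀ x, BddAbove (range fun n : ℤ ↦ φ ((F ^ n) x) - s n)) (x : X) :
    (⨆ n : ℤ, (φ ((F ^ n) (F x)) - s n)) - ⨆ n : ℤ, (φ ((F ^ n) x) - s n) ∈ Icc a b := by
  have hstep (n : ℤ) : φ ((F ^ n) (F x)) - s n =
      φ ((F ^ (n + 1)) x) - s (n + 1) + (s (n + 1) - s n) := by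
    rw [zpow_add_one, Homeomorph.mul_apply]
    ring
  have hle (n : ℤ) : φ ((F ^ n) x) - s n ≤ ⨆ n : ℤ, (φ ((F ^ n) x) - s n) := le_ciSup (hbdd x) n
  constructor
  · rw [le_sub_iff_add_le', ← le_sub_iff_add_le]
    refine ciSup_le fun n ↦ ?_
    have := le_ciSup (hbdd (F x)) (n - 1)
    rw [hstep, sub_add_cancel] at this
    have hs' := (hs (n - 1)).1
    rw [sub_add_cancel] at hs'
    linarith
  · rw [sub_le_iff_le_add']
    refine ciSup_le fun n ↦ ?_
    linarith [hstep n, hle (n + 1), (hs n).2]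

lemma max_mul_intCast_add_one_sub_mem {a b : ℝ} (hab : a ≤ b) (n : ℤ) :
    max (a * (n + 1 : ℤ)) (b * (n + 1 : ℤ)) - max (a * n) (b * n) ∈ Icc a b := by
  push_cast
  rcases lt_or_ge n 0 with hn | hn
  · have h₀ : (n : ℝ) + 1 ≤ 0 := by exact_mod_cast hn
    rw [max_eq_left (by nlinarith), max_eq_left (by nlinarith)]
    exact ⟨by linarith, by linarith⟩
  · have h₀ : (0 : ℝ) ≤ n := by exact_mod_cast hn
    rw [max_eq_right (by nlinarith), max_eq_right (by nlinarith)]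
    exact ⟨by linarith, by linarith⟩

lemma max_mul_add_mul_abs_le {a b : ℝ} (hab : a ≤ b) (ε x : ℝ) :
    max (a * x) (b * x) + ε * |x| ≤ max ((a - ε) * x) ((b + ε) * x) := by
  rcases le_total 0 x with hx | hx
  · rw [max_eq_right (by gcongr), abs_of_nonneg hx]
    exact le_max_of_le_right (by linarith)
  · rw [max_eq_left (mul_le_mul_of_nonpos_right hab hx), abs_of_nonpos hx]
    exact le_max_of_le_left (by linarith)

lemma exists_height_of_displacement_bound {F : Plane ≃ₜ Plane} (hF : Commute F deck) {a b ε : ℝ}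
    (hab : a ≤ b) (hε : 0 < ε) {w : ℝ → ℝ} (hw : Continuous w)
    (hbound : ∀ (n : ℤ) (z : Plane),
      ((F ^ n) z).1 - z.1 ≤ max (a * n) (b * n) + w z.2 + w ((F ^ n) z).2) :
    ∃ h : Plane → ℝ, Continuous h ∧ (∀ p, h (deck p) = h p + 1) ∧
      ∀ p, h (F p) - h p ∈ Icc (a - ε) (b + ε) := by
  let φ : Plane → ℝ := fun p ↦ p.1 - w p.2
  let s : ℤ → ℝ := fun n ↦ max ((a - ε) * n) ((b + ε) * n)
  have hφ : Continuous φ := by fun_prop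
  have hterm (n : ℤ) (z : Plane) : φ ((F ^ n) z) - s n ≤ z.1 + w z.2 - ε * |(n : ℝ)| := by
    linarith [hbound n z, max_mul_add_mul_abs_le hab ε (n : ℝ)]
  have hbdd (z : Plane) : BddAbove (range fun n : ℤ ↦ φ ((F ^ n) z) - s n) :=
    ⟨z.1 + w z.2, forall_mem_range.2 fun n ↦
      (hterm n z).trans (sub_le_self _ (by positivity))⟩
  refine ⟨fun z ↦ ⨆ n : ℤ, (φ ((F ^ n) z) - s n), ?_, fun p ↦ ?_,
    iSup_orbit_sub_mem_Icc (max_mul_intCast_add_one_sub_mem (by linarith)) hbdd⟩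
  · refine continuous_ciSup_of_locally_dominated
      (fun n ↦ (hφ.comp (F ^ n).continuous).sub continuous_const) fun z₀ ↦ ?_
    obtain ⟨N, hN⟩ := exists_nat_gt ((2 * w z₀.2) / ε)
    refine ⟨Finset.Icc (-N) N, 0, by simp, ?_⟩
    have hlt : 2 * w z₀.2 < ε * N := by rwa [div_lt_iff₀' hε] at hN
    filter_upwards [((by fun_prop : Continuous fun z : Plane ↦ 2 * w z.2).tendsto
      z₀).eventually_lt_const hlt] with z hz n hn
    have hNn : (N : ℝ) ≤ |(n : ℝ)| := by
      rw [Finset.mem_Icc, ← abs_le, not_le] at hn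
      exact_mod_cast hn.le
    have h₀ : φ ((F ^ (0 : ℤ)) z) - s 0 = z.1 - w z.2 := by simp [φ, s]
    rw [h₀]
    linarith [hterm n z, mul_le_mul_of_nonneg_left hNn hε.le]
  · rw [ciSup_add (hbdd p)]
    refine iSup_congr fun n ↦ ?_
    rw [commute_deck_iff.1 (hF.zpow_left n), deck_apply]
    ring

lemma exists_height {F : Plane ≃ₜ Plane} (hF : Commute F deck) {a b ε : ℝ} (hab : a ≤ b)
    (hε : 0 < ε) (hsub : RotWeak F ⊆ Icc (a : EReal) b) :
    ∃ h : Plane → ℝ, Continuous h ∧ (∀ p, h (deck p) = h p + 1) ∧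
      ∀ p, h (F p) - h p ∈ Icc (a - ε) (b + ε) := by
  have hε₂ : 0 < ε / 2 := half_pos hε
  have hsub' : RotWeak F ⊆ Ioo ((a - ε / 2 : ℝ) : EReal) (b + ε / 2 : ℝ) :=
    hsub.trans (Icc_subset_Ioo (EReal.coe_lt_coe (sub_lt_self a hε₂))
      (EReal.coe_lt_coe (lt_add_of_pos_right b hε₂)))
  obtain ⟨w, hw, hbound⟩ := exists_displacement_bound hF hsub'
  obtain ⟨h, hcont, hdeck, hh⟩ :=
    exists_height_of_displacement_bound hF (by linarith) hε₂ hw hbound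
  exact ⟨h, hcont, hdeck, fun p ↦ ⟨by linarith [(hh p).1], by linarith [(hh p).2]⟩⟩

lemma exists_abs_sub_fst_le {h : Plane → ℝ} (hh : Continuous h)
    (hdeck : ∀ p, h (deck p) = h p + 1) :
    ∃ g : ℝ → ℝ, Continuous g ∧ ∀ p, |h p - p.1| ≤ g p.2 := by
  have hk (y : ℝ) : ∃ C, ∀ p : Plane, |p.2| ≤ y → |h p - p.1| ≤ C :=
    exists_bound_of_deck_invariant (by fun_prop)
      (fun p ↦ by rw [hdeck, deck_apply, add_sub_add_right_eq_sub]) y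
  have hloc (y : ℝ) : ∃ c, ∀ᶠ y' in 𝓝 y, c ∈ {c : ℝ | ∀ x, |h (x, y') - x| ≤ c} := by
    obtain ⟨C, hC⟩ := hk (|y| + 1)
    refine ⟨C, ?_⟩
    filter_upwards [(continuous_abs.tendsto y).eventually_lt_const (lt_add_one |y|)] with y' hy' x
    exact hC (x, y') hy'.le
  obtain ⟨g, hg⟩ := exists_continuous_forall_mem_convex_of_local_const (fun y ↦
    (IsUpperSet.ordConnected fun c d hcd hc x ↦ (hc x).trans hcd).convex) hloc
  exact ⟨g, g.continuous, fun p ↦ hg p.2 p.1⟩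

/-! ### Sides of a subset of the plane -/

/-- The side of `S` seen from the end `l` of the horizontal axis: the connected component of `Sᶜ`
that contains the points `(x, 0)` for `x` eventually along `l`. The sets `Lset S` and `Rset S` are
the cases `l = atBot` and `l = atTop`. -/
def farSide (l : Filter ℝ) (S : Set Plane) : Set Plane :=
  {p | ∀ᶠ x in l, p ∈ connectedComponentIn Sᶜ (x, 0)}

lemma Lset_eq_farSide (S : Set Plane) : Lset S = farSide atBot S := by
  ext p
  exact eventually_atBot.symm

lemma Rset_eq_farSide (S : Set Plane) : Rset S = farSide atTop S := by
  ext p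
  exact eventually_atTop.symm

section FarSide

variable {l : Filter ℝ} {S S' C Q : Set Plane}

lemma farSide_anti (h : S ⊆ S') : farSide l S' ⊆ farSide l S := fun _ hp ↦
  hp.mono fun x hx ↦ connectedComponentIn_mono (x, 0) (compl_subset_compl.2 h) hx

lemma subset_farSide (hC : IsPreconnected C) (hCS : Disjoint C S) (hCl : ∀ᶠ x in l, (x, 0) ∈ C) :
    C ⊆ farSide l S := fun _ hp ↦
  hCl.mono fun _ hx ↦ hC.subset_connectedComponentIn hx hCS.subset_compl_right hp

variable [l.NeBot]

lemma disjoint_farSide : Disjoint (farSide l S) S := by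
  refine disjoint_left.2 fun p hp ↦ ?_
  obtain ⟨x, hx⟩ := hp.exists
  exact connectedComponentIn_subset _ _ hx

lemma farSide_eq_connectedComponentIn {p : Plane} (hp : p ∈ farSide l S) :
    farSide l S = connectedComponentIn Sᶜ p := by
  ext q
  refine ⟨fun hq ↦ ?_, fun hq ↦ hp.mono fun x hx ↦ connectedComponentIn_eq hx ▸ hq⟩
  obtain ⟨x, hpx, hqx⟩ := (hp.and hq).exists
  exact connectedComponentIn_eq hpx ▸ hqx

lemma isPreconnected_farSide : IsPreconnected (farSide l S) := by
  rcases (farSide l S).eq_empty_or_nonempty with h | ⟨p, hp⟩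
  · exact h ▸ isPreconnected_empty
  · exact farSide_eq_connectedComponentIn hp ▸ isPreconnected_connectedComponentIn

lemma isOpen_farSide (hS : IsClosed S) : IsOpen (farSide l S) := by
  rcases (farSide l S).eq_empty_or_nonempty with h | ⟨p, hp⟩
  · exact h ▸ isOpen_empty
  · exact farSide_eq_connectedComponentIn hp ▸ hS.isOpen_compl.connectedComponentIn

lemma subset_farSide_of_inter_nonempty (hQ : IsPreconnected Q) (hQS : Disjoint Q S)
    (h : (Q ∩ farSide l S).Nonempty) : Q ⊆ farSide l S := by
  obtain ⟨p, hpQ, hp⟩ := h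
  rw [farSide_eq_connectedComponentIn hp]
  exact hQ.subset_connectedComponentIn hpQ hQS.subset_compl_right

lemma image_farSide (Φ : Plane ≃ₜ Plane) (hC : IsPreconnected C) (hCS : Disjoint C S)
    (hCl : ∀ᶠ x in l, (x, 0) ∈ C) (hCΦ : ∀ᶠ x in l, (x, 0) ∈ Φ '' C) :
    Φ '' farSide l S = farSide l (Φ '' S) := by
  obtain ⟨x, hx⟩ := hCl.exists
  have hxC : (x, 0) ∈ farSide l S := subset_farSide hC hCS hCl hx
  have hΦC : Φ '' C ⊆ farSide l (Φ '' S) :=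
    subset_farSide (hC.image Φ Φ.continuous.continuousOn)
      ((disjoint_image_iff Φ.injective).2 hCS) hCΦ
  rw [farSide_eq_connectedComponentIn hxC,
    farSide_eq_connectedComponentIn (hΦC (mem_image_of_mem Φ hx)),
    Φ.image_connectedComponentIn (disjoint_left.1 disjoint_farSide hxC), image_compl_eq Φ.bijective]

end FarSide

/-- The region of the plane to the west of the graph `x = c y`. -/
def west (c : ℝ → ℝ) : Set Plane := {p | p.1 < c p.2}

/-- The region of the plane to the east of the graph `x = c y`. -/
def east (c : ℝ → ℝ) : Set Plane := {p | c p.2 < p.1}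

section WestEast

variable {c : ℝ → ℝ} {Φ : Plane ≃ₜ Plane} {S : Set Plane}

lemma isPreconnected_west (hc : Continuous c) : IsPreconnected (west c) := by
  have : west c = (fun p : Plane ↦ (p.1 + c p.2, p.2)) '' Iio 0 ×ˢ univ := by
    ext p
    refine ⟨fun hp ↦ ⟨(p.1 - c p.2, p.2), ⟨mem_Iio.2 (sub_neg.2 hp), mem_univ _⟩, by simp⟩, ?_⟩
    rintro ⟨q, hq, rfl⟩
    exact add_lt_of_neg_left _ (mem_Iio.1 hq.1)
  rw [this]
  exact (isPreconnected_Iio.prod isPreconnected_univ).image _ (by fun_prop)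

lemma isPreconnected_east (hc : Continuous c) : IsPreconnected (east c) := by
  have : east c = (fun p : Plane ↦ (p.1 + c p.2, p.2)) '' Ioi 0 ×ˢ univ := by
    ext p
    refine ⟨fun hp ↦ ⟨(p.1 - c p.2, p.2), ⟨mem_Ioi.2 (sub_pos.2 hp), mem_univ _⟩, by simp⟩, ?_⟩
    rintro ⟨q, hq, rfl⟩
    exact lt_add_of_pos_left _ (mem_Ioi.1 hq.1)
  rw [this]
  exact (isPreconnected_Ioi.prod isPreconnected_univ).image _ (by fun_prop)

lemma exists_abs_fst_sub_le (hΦ : Commute Φ deck) (hc : Continuous c) :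
    ∃ C, ∀ x : ℝ, |(Φ (x, 0)).1 - c (Φ (x, 0)).2 - x| ≤ C := by
  obtain ⟨C, hC⟩ := exists_bound_of_deck_invariant
    (k := fun p ↦ (Φ p).1 - c (Φ p).2 - p.1) (by fun_prop) (fun p ↦ by
      rw [commute_deck_iff.1 hΦ, deck_apply, deck_apply]
      ring) 0
  exact ⟨C, fun x ↦ hC (x, 0) (by simp)⟩

lemma eventually_apply_mem_west (hΦ : Commute Φ deck) (hc : Continuous c) :
    ∀ᶠ x : ℝ in atBot, Φ (x, 0) ∈ west c := by
  obtain ⟨C, hC⟩ := exists_abs_fst_sub_le hΦ hc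
  filter_upwards [eventually_lt_atBot (-C)] with x hx
  have : (Φ (x, 0)).1 < c (Φ (x, 0)).2 := by linarith [(abs_le.1 (hC x)).2]
  exact this

lemma eventually_apply_mem_east (hΦ : Commute Φ deck) (hc : Continuous c) :
    ∀ᶠ x : ℝ in atTop, Φ (x, 0) ∈ east c := by
  obtain ⟨C, hC⟩ := exists_abs_fst_sub_le hΦ hc
  filter_upwards [eventually_gt_atTop C] with x hx
  have : c (Φ (x, 0)).2 < (Φ (x, 0)).1 := by linarith [(abs_le.1 (hC x)).1]
  exact this

lemma eventually_mem_Lset (hc : Continuous c) (hS : Disjoint (west c) S) :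
    ∀ᶠ x : ℝ in atBot, (x, 0) ∈ Lset S := by
  have hwest := eventually_apply_mem_west (.one_left deck) hc
  rw [Lset_eq_farSide]
  exact hwest.mono fun x hx ↦ subset_farSide (isPreconnected_west hc) hS hwest hx

lemma image_Lset (hΦ : Commute Φ deck) (hc : Continuous c) (hS : Disjoint (west c) S) :
    Φ '' Lset S = Lset (Φ '' S) := by
  simp only [Lset_eq_farSide]
  refine image_farSide Φ (isPreconnected_west hc) hS
    (eventually_apply_mem_west (.one_left deck) hc) ?_
  filter_upwards [eventually_apply_mem_west hΦ.inv_left hc] with x hx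
  exact ⟨_, hx, Φ.apply_symm_apply _⟩

lemma image_Rset (hΦ : Commute Φ deck) (hc : Continuous c) (hS : Disjoint (east c) S) :
    Φ '' Rset S = Rset (Φ '' S) := by
  simp only [Rset_eq_farSide]
  refine image_farSide Φ (isPreconnected_east hc) hS
    (eventually_apply_mem_east (.one_left deck) hc) ?_
  filter_upwards [eventually_apply_mem_east hΦ.inv_left hc] with x hx
  exact ⟨_, hx, Φ.apply_symm_apply _⟩

lemma lineLT_image {c' : ℝ → ℝ} {S' : Set Plane} (hΦ : Commute Φ deck) (hc : Continuous c)
    (hS : Disjoint (west c) S) (hc' : Continuous c') (hS' : Disjoint (west c') S')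
    (h : lineLT S S') : lineLT (Φ '' S) (Φ '' S') := by
  rw [lineLT, ← image_Lset hΦ hc hS, ← image_Lset hΦ hc' hS', ← Φ.image_closure]
  exact image_mono h

lemma lineLT_of_subset_Rset {S' : Set Plane} (hS : IsClosed S) (hLR : Disjoint (Lset S) (Rset S))
    (hfar : ∀ᶠ x : ℝ in atBot, (x, 0) ∈ Lset S) (hS' : S' ⊆ Rset S) : lineLT S S' := by
  have hR : IsOpen (Rset S) := Rset_eq_farSide S ▸ isOpen_farSide hS
  have hL : IsPreconnected (Lset S) := Lset_eq_farSide S ▸ isPreconnected_farSide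
  rw [lineLT, Lset_eq_farSide S']
  exact subset_farSide hL.closure ((hLR.closure_left hR).mono_right hS')
    (hfar.mono fun x hx ↦ subset_closure hx)

end WestEast

/-! ### Separation by a line -/

section PoincareMiranda

open Real

lemma angle_mem_Ioo {θ : ℝ → ℝ} {c : ℝ} (hθ : Continuous θ) (hpos : ∀ t, 0 < cos (θ t - c)) {s : ℝ}
    (hs : θ s ∈ Ioo c (c + π)) (t : ℝ) : θ t ∈ Ioo (c - π / 2) (c + π / 2) := by
  have hs' : θ s < c + π / 2 := by
    by_contra! h
    exact (hpos s).not_ge (cos_nonpos_of_pi_div_two_le_of_le (by linarith)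
      (by linarith [hs.2, pi_pos]))
  have hord : OrdConnected (range θ) := (isPreconnected_range hθ).ordConnected
  constructor <;> by_contra! h
  · obtain ⟨u, hu⟩ := hord.out (mem_range_self t) (mem_range_self s)
      ⟨h, by linarith [hs.1, pi_pos]⟩
    exact (hpos u).ne' (by rw [hu, sub_sub_cancel_left, cos_neg, cos_pi_div_two])
  · obtain ⟨u, hu⟩ := hord.out (mem_range_self s) (mem_range_self t) ⟨hs'.le, h⟩
    exact (hpos u).ne' (by rw [hu, add_sub_cancel_left, cos_pi_div_two])

lemma exists_continuous_angle {u v : ℝ × ℝ → ℝ} (hu : Continuous u) (hv : Continuous v)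
    (hne : ∀ p, u p = 0 → v p ≠ 0) {p₀ : ℝ × ℝ} (hp₀ : u p₀ < 0) :
    ∃ r θ : ℝ × ℝ → ℝ, Continuous θ ∧ θ p₀ ∈ Ioo (π / 2) (π / 2 + π) ∧ (∀ p, 0 < r p) ∧
      (∀ p, u p = r p * cos (θ p)) ∧ ∀ p, v p = r p * sin (θ p) := by
  let D (p : ℝ × ℝ) : ℂ := ⟨u p, v p⟩
  have hD : Continuous D := Complex.equivRealProdCLM.symm.continuous.comp (hu.prodMk hv)
  have h0 (p) : D p ≠ 0 := fun h ↦ hne p (congrArg Complex.re h) (congrArg Complex.im h)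
  have hz₀ : Complex.exp (Complex.log (-D p₀) + π * Complex.I) = D p₀ := by
    rw [Complex.exp_add, Complex.exp_log (neg_ne_zero.2 (h0 _)), Complex.exp_pi_mul_I]
    ring
  obtain ⟨L, ⟨hL₀, hL⟩, -⟩ :=
    Complex.isCoveringMapOn_exp.existsUnique_continuousMap_lifts ⟨D, hD⟩ hz₀ h0
  have hexp (p) : Complex.exp (L p) = D p := congrFun hL p
  have harg : |(-D p₀).arg| < π / 2 :=
    Complex.abs_arg_lt_pi_div_two_iff.2 (Or.inl (neg_pos.2 hp₀))
  have him : (L p₀).im = (-D p₀).arg + π := by simp [hL₀, Complex.log_im]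
  exact ⟨fun p ↦ exp (L p).re, fun p ↦ (L p).im, by fun_prop,
    ⟨by linarith [abs_lt.1 harg], by linarith [abs_lt.1 harg]⟩, fun p ↦ exp_pos _,
    fun p ↦ by rw [← Complex.exp_re, hexp], fun p ↦ by rw [← Complex.exp_im, hexp]⟩

/-- Otherwise `u + i v` has a continuous argument, which decreases by `2 π` along the boundary of
the square, traversed counterclockwise. -/
lemma poincare_miranda {u v : ℝ × ℝ → ℝ} (hu : Continuous u) (hv : Continuous v)
    (hleft : ∀ t, u (0, t) < 0) (hright : ∀ t, 0 < u (1, t))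
    (hbot : ∀ s, 0 < v (s, 0)) (htop : ∀ s, v (s, 1) < 0) : ∃ p, u p = 0 ∧ v p = 0 := by
  by_contra! hne
  obtain ⟨r, θ, hθ, h₀₀, hr, hcos, hsin⟩ := exists_continuous_angle hu hv hne (hleft 0)
  simp only [hcos, hsin, ← smul_eq_mul, smul_pos_iff_of_pos_left (hr _),
    smul_neg_iff_of_pos_left (hr _)] at hleft hright hbot htop
  have h₁₀ : θ (1, 0) ∈ Ioo 0 (0 + π) := by
    have := angle_mem_Ioo (θ := fun s ↦ θ (s, 0)) (by fun_prop)
      (fun s ↦ by simpa [cos_sub] using hbot s) h₀₀ 1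
    ring_nf at this ⊢
    exact this
  have h₁₁ : θ (1, 1) ∈ Ioo (-(π / 2)) (-(π / 2) + π) := by
    have := angle_mem_Ioo (θ := fun t ↦ θ (1, t)) (by fun_prop)
      (fun t ↦ by simpa using hright t) h₁₀ 1
    ring_nf at this ⊢
    exact this
  have h₀₁ : θ (0, 1) ∈ Ioo (-π) (-π + π) := by
    have := angle_mem_Ioo (θ := fun s ↦ θ (s, 1)) (by fun_prop)
      (fun s ↦ by simpa [cos_add] using htop s) h₁₁ 0
    ring_nf at this ⊢
    exact this
  have h₀₀' := angle_mem_Ioo (θ := fun t ↦ θ (0, t)) (by fun_prop)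
    (fun t ↦ by simpa [cos_add] using hleft t) h₀₁ 0
  linarith [h₀₀.1, h₀₀'.2, pi_pos]

end PoincareMiranda

section Crossing

open unitInterval

lemma exists_eq_of_crossing {α β : C(I, Plane)} (hleft : ∀ t, (α 0).1 < (β t).1)
    (hright : ∀ t, (β t).1 < (α 1).1) (hbot : ∀ s, (β 0).2 < (α s).2)
    (htop : ∀ s, (α s).2 < (β 1).2) : ∃ s t, α s = β t := by
  let e : ℝ → I := projIcc 0 1 zero_le_one
  have he : Continuous e := continuous_projIcc
  have he₀ : e 0 = 0 := projIcc_left zero_le_one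
  have he₁ : e 1 = 1 := projIcc_right zero_le_one
  obtain ⟨p, h₁, h₂⟩ := poincare_miranda (u := fun p ↦ (α (e p.1)).1 - (β (e p.2)).1)
    (v := fun p ↦ (α (e p.1)).2 - (β (e p.2)).2) (by fun_prop) (by fun_prop)
    (fun t ↦ by simpa [he₀] using hleft (e t)) (fun t ↦ by simpa [he₁] using hright (e t))
    (fun s ↦ by simpa [he₀] using hbot (e s)) (fun s ↦ by simpa [he₁] using htop (e s))
  exact ⟨e p.1, e p.2, Prod.ext (sub_eq_zero.1 h₁) (sub_eq_zero.1 h₂)⟩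

lemma exists_joinedIn_strip {U : Set Plane} (hU : IsPathConnected U) {s₀ s₁ : ℝ}
    (h₀ : ∀ x ≤ s₀, (x, 0) ∈ U) (h₁ : ∀ x ≥ s₁, (x, 0) ∈ U) :
    ∃ Y, ∀ x ≤ s₀, ∀ x' ≥ s₁, JoinedIn (U ∩ {p | |p.2| ≤ Y}) (x, 0) (x', 0) := by
  obtain ⟨P, hP⟩ := hU.joinedIn _ (h₀ s₀ le_rfl) _ (h₁ s₁ le_rfl)
  obtain ⟨Y, hY⟩ := (isCompact_range P.continuous).exists_bound_of_continuousOn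
    continuous_snd.continuousOn
  have hYP (t) : |(P t).2| ≤ Y := hY _ (mem_range_self t)
  have hY₀ : 0 ≤ Y := (abs_nonneg _).trans (hYP 0)
  have hseg {J : Set ℝ} (hJ : Convex ℝ J) (hJU : ∀ x ∈ J, (x, 0) ∈ U) {x x' : ℝ} (hx : x ∈ J)
      (hx' : x' ∈ J) : JoinedIn (U ∩ {p | |p.2| ≤ Y}) (x, 0) (x', 0) := by
    refine JoinedIn.of_segment_subset ?_
    rw [← Prod.image_mk_segment_left]
    rintro _ ⟨y, hy, rfl⟩
    exact ⟨hJU y (hJ.segment_subset hx hx' hy), by simpa using hY₀⟩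
  exact ⟨Y, fun x hx x' hx' ↦ ((hseg (convex_Iic s₀) h₀ hx (mem_Iic.2 le_rfl)).trans
    ⟨P, fun t ↦ ⟨hP t, hYP t⟩⟩).trans (hseg (convex_Ici s₁) h₁ (mem_Ici.2 le_rfl) hx')⟩

lemma not_disjoint_range_of_isPathConnected {Γ : ℝ → Plane} (hΓ : Continuous Γ)
    (hN : Tendsto (fun t ↦ (Γ t).2) atTop atTop) (hS : Tendsto (fun t ↦ (Γ t).2) atBot atBot)
    {U : Set Plane} (hU : IsPathConnected U) (hwest : ∀ᶠ x : ℝ in atBot, (x, 0) ∈ U)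
    (heast : ∀ᶠ x : ℝ in atTop, (x, 0) ∈ U) : ¬ Disjoint U (range Γ) := by
  obtain ⟨s₀, h₀⟩ := eventually_atBot.1 hwest
  obtain ⟨s₁, h₁⟩ := eventually_atTop.1 heast
  obtain ⟨Y, hY⟩ := exists_joinedIn_strip hU h₀ h₁
  obtain ⟨t₀, ht₀⟩ := (hS.eventually_lt_atBot (-Y)).exists
  obtain ⟨t₁, ht₁⟩ := (hN.eventually_gt_atTop Y).exists
  let β : C(I, Plane) := ⟨fun t ↦ Γ (AffineMap.lineMap t₀ t₁ (t : ℝ)), by fun_prop⟩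
  have hβ₀ : β 0 = Γ t₀ := by simp [β]
  have hβ₁ : β 1 = Γ t₁ := by simp [β]
  obtain ⟨X, hX⟩ := (isCompact_range β.continuous).exists_bound_of_continuousOn
    continuous_fst.continuousOn
  have hXβ (t) : |(β t).1| ≤ X := hX _ (mem_range_self t)
  obtain ⟨P, hP⟩ := hY (min s₀ (-X - 1)) (min_le_left _ _) (max s₁ (X + 1)) (le_max_left _ _)
  obtain ⟨s, t, hst⟩ := exists_eq_of_crossing (α := P.toContinuousMap) (β := β)
    (fun t ↦ by simpa using Or.inr (by linarith [abs_le.1 (hXβ t)]))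
    (fun t ↦ by simpa using Or.inr (by linarith [abs_le.1 (hXβ t)]))
    (fun s ↦ hβ₀ ▸ ht₀.trans_le (abs_le.1 (hP s).2).1)
    (fun s ↦ hβ₁ ▸ (abs_le.1 (hP s).2).2.trans_lt ht₁)
  exact not_disjoint_iff.2 ⟨P s, (hP s).1, _, hst.symm⟩

lemma disjoint_Lset_Rset_range {Γ : ℝ → Plane} (hΓ : Continuous Γ) (hcl : IsClosed (range Γ))
    (hN : Tendsto (fun t ↦ (Γ t).2) atTop atTop) (hS : Tendsto (fun t ↦ (Γ t).2) atBot atBot) :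
    Disjoint (Lset (range Γ)) (Rset (range Γ)) := by
  refine disjoint_left.2 fun p hpL hpR ↦ ?_
  have hL : p ∈ farSide atBot (range Γ) := Lset_eq_farSide (range Γ) ▸ hpL
  have hR : p ∈ farSide atTop (range Γ) := Rset_eq_farSide (range Γ) ▸ hpR
  let U := connectedComponentIn (range Γ)ᶜ p
  have hpU : p ∈ U := mem_connectedComponentIn (disjoint_left.1 disjoint_farSide hL)
  have hopen : IsOpen U := hcl.isOpen_compl.connectedComponentIn
  have hU : IsPathConnected U := hopen.isConnected_iff_isPathConnected.1
    ⟨⟨p, hpU⟩, isPreconnected_connectedComponentIn⟩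
  have hfar {l : Filter ℝ} (hp : p ∈ farSide l (range Γ)) : ∀ᶠ x in l, (x, 0) ∈ U :=
    hp.mono fun x hx ↦ (connectedComponentIn_eq hx).subset
      (mem_connectedComponentIn (connectedComponentIn_nonempty_iff.1 ⟨p, hx⟩))
  exact not_disjoint_range_of_isPathConnected hΓ hN hS hU (hfar hL) (hfar hR)
    (disjoint_compl_left.mono_left (connectedComponentIn_subset _ _))

end Crossing

/-! ### Walking along the boundary of a colouring of the triangular lattice -/

/-- The six unit vectors of the triangular lattice, modelled on `ℤ × ℤ`, in cyclic order: `k + 3` is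
opposite to `k`, and `0`, `hexDir k`, `hexDir (k + 1)` are the vertices of a triangle. -/
def hexDir : Fin 6 → ℤ × ℤ := ![(1, 0), (0, 1), (-1, 1), (-1, 0), (0, -1), (1, -1)]

lemma hexDir_sub_one_add_hexDir_add_one (k : Fin 6) :
    hexDir (k - 1) + hexDir (k + 1) = hexDir k := by
  revert k; decide

lemma hexDir_add_three (k : Fin 6) : hexDir (k + 3) = -hexDir k := by
  revert k; decide

lemma abs_hexDir_snd_le (k : Fin 6) : |(hexDir k).2| ≤ 1 := by
  revert k; decide

/-- The edge from `s.1` in the direction `s.2` leaves the colour class `A`. -/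
def IsMixed (A : ℤ × ℤ → Prop) (s : (ℤ × ℤ) × Fin 6) : Prop :=
  A s.1 ∧ ¬ A (s.1 + hexDir s.2)

/-- The edges that leave the colour class `A`, i.e. the edges crossed by its boundary. -/
abbrev MixedEdge (A : ℤ × ℤ → Prop) : Type := {s : (ℤ × ℤ) × Fin 6 // IsMixed A s}

open Classical in
/-- One step along the boundary of `A`: of the two other edges of the triangle on the right of a
mixed edge exactly one is mixed, and it is the next edge. -/
def nextEdge (A : ℤ × ℤ → Prop) (s : (ℤ × ℤ) × Fin 6) : (ℤ × ℤ) × Fin 6 :=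
  if A (s.1 + hexDir (s.2 - 1)) then (s.1 + hexDir (s.2 - 1), s.2 + 1) else (s.1, s.2 - 1)

open Classical in
/-- One step along the boundary of `A` in the opposite direction, through the triangle on the
left. -/
def prevEdge (A : ℤ × ℤ → Prop) (s : (ℤ × ℤ) × Fin 6) : (ℤ × ℤ) × Fin 6 :=
  if A (s.1 + hexDir (s.2 + 1)) then (s.1 + hexDir (s.2 + 1), s.2 - 1) else (s.1, s.2 + 1)

section Walk

variable {A B : ℤ × ℤ → Prop} {s : (ℤ × ℤ) × Fin 6}

lemma IsMixed.nextEdge (h : IsMixed A s) : IsMixed A (nextEdge A s) := by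
  unfold _root_.nextEdge
  split_ifs with hA
  · refine ⟨hA, ?_⟩
    rw [add_assoc, hexDir_sub_one_add_hexDir_add_one]
    exact h.2
  · exact ⟨h.1, hA⟩

lemma IsMixed.prevEdge (h : IsMixed A s) : IsMixed A (prevEdge A s) := by
  unfold _root_.prevEdge
  split_ifs with hA
  · refine ⟨hA, ?_⟩
    rw [add_assoc, add_comm (hexDir _), hexDir_sub_one_add_hexDir_add_one]
    exact h.2
  · exact ⟨h.1, hA⟩

lemma prevEdge_nextEdge (h : IsMixed A s) : prevEdge A (nextEdge A s) = s := by
  by_cases hA : A (s.1 + hexDir (s.2 - 1))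
  · have hback : s.1 + hexDir (s.2 - 1) + hexDir (s.2 + 1 + 1) = s.1 := by
      rw [show s.2 + 1 + 1 = s.2 - 1 + 3 by omega, hexDir_add_three, add_neg_cancel_right]
    rw [nextEdge, if_pos hA, prevEdge, if_pos (by simpa only [hback] using h.1), hback,
      add_sub_cancel_right]
  · rw [nextEdge, if_neg hA, prevEdge, sub_add_cancel, if_neg h.2]

lemma nextEdge_prevEdge (h : IsMixed A s) : nextEdge A (prevEdge A s) = s := by
  by_cases hA : A (s.1 + hexDir (s.2 + 1))
  · have hback : s.1 + hexDir (s.2 + 1) + hexDir (s.2 - 1 - 1) = s.1 := by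
      rw [show s.2 - 1 - 1 = s.2 + 1 + 3 by omega, hexDir_add_three, add_neg_cancel_right]
    rw [prevEdge, if_pos hA, nextEdge, if_pos (by simpa only [hback] using h.1), hback,
      sub_add_cancel]
  · rw [prevEdge, if_neg hA, nextEdge, add_sub_cancel_right, if_neg h.2]

/-- The walk along the boundary of `A`, as a permutation of its mixed edges. -/
def boundaryWalk (A : ℤ × ℤ → Prop) : Equiv.Perm (MixedEdge A) where
  toFun s := ⟨nextEdge A s, s.2.nextEdge⟩
  invFun s := ⟨prevEdge A s, s.2.prevEdge⟩
  left_inv s := Subtype.ext (prevEdge_nextEdge s.2)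
  right_inv s := Subtype.ext (nextEdge_prevEdge s.2)

lemma coe_boundaryWalk_pow (e : MixedEdge A) (n : ℕ) :
    ((boundaryWalk A ^ n) e : (ℤ × ℤ) × Fin 6) = (nextEdge A)^[n] e := by
  have h : Function.Semiconj Subtype.val (boundaryWalk A) (nextEdge A) := fun _ ↦ rfl
  rw [← Equiv.Perm.iterate_eq_pow]
  exact h.iterate_right n e

lemma coe_boundaryWalk_inv_pow (e : MixedEdge A) (n : ℕ) :
    (((boundaryWalk A)⁻¹ ^ n) e : (ℤ × ℤ) × Fin 6) = (prevEdge A)^[n] e := by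
  have h : Function.Semiconj Subtype.val ((boundaryWalk A)⁻¹ : Equiv.Perm _) (prevEdge A) :=
    fun _ ↦ rfl
  rw [← Equiv.Perm.iterate_eq_pow]
  exact h.iterate_right n e

lemma abs_row_nextEdge_sub_le (A : ℤ × ℤ → Prop) (s : (ℤ × ℤ) × Fin 6) :
    |(nextEdge A s).1.2 - s.1.2| ≤ 1 := by
  unfold nextEdge
  split_ifs
  · simpa using abs_hexDir_snd_le (s.2 - 1)
  · simp

lemma nextEdge_congr (h : ∀ v : ℤ × ℤ, s.1.2 - 1 ≤ v.2 → (A v ↔ B v)) :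
    nextEdge A s = nextEdge B s := by
  have hk := abs_le.1 (abs_hexDir_snd_le (s.2 - 1))
  classical exact if_congr (h (s.1 + hexDir (s.2 - 1)) (by simp only [Prod.snd_add]; omega)) rfl rfl

lemma prevEdge_congr (h : ∀ v : ℤ × ℤ, s.1.2 - 1 ≤ v.2 → (A v ↔ B v)) :
    prevEdge A s = prevEdge B s := by
  have hk := abs_le.1 (abs_hexDir_snd_le (s.2 + 1))
  classical exact if_congr (h (s.1 + hexDir (s.2 + 1)) (by simp only [Prod.snd_add]; omega)) rfl rfl

lemma isMixed_congr (h : ∀ v : ℤ × ℤ, s.1.2 - 1 ≤ v.2 → (A v ↔ B v)) :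
    IsMixed A s ↔ IsMixed B s := by
  have hk := abs_le.1 (abs_hexDir_snd_le s.2)
  exact and_congr (h s.1 (by omega))
    (not_congr (h (s.1 + hexDir s.2) (by simp only [Prod.snd_add]; omega)))

end Walk

/-- On each row, `A` contains all points far enough to the east and no point far enough to the
west. -/
def SplitsRows (A : ℤ × ℤ → Prop) : Prop :=
  ∀ j, (∀ᶠ i in atTop, A (i, j)) ∧ ∀ᶠ i in atBot, ¬ A (i, j)

lemma SplitsRows.finite_isMixed {A : ℤ × ℤ → Prop} (hA : SplitsRows A) (j : ℤ) :
    {s | IsMixed A s ∧ s.1.2 = j}.Finite := by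
  have hfin : ∀ k, {i | IsMixed A ((i, j), k)}.Finite := fun k ↦ by
    suffices ∀ᶠ i in cofinite, ¬ IsMixed A ((i, j), k) by simpa using eventually_cofinite.1 this
    rw [Int.cofinite_eq, eventually_sup]
    refine ⟨(hA j).2.mono fun i hi h ↦ hi h.1, ?_⟩
    have hshift := (tendsto_atTop_add_const_right atTop (hexDir k).1 tendsto_id).eventually
      (hA (j + (hexDir k).2)).1
    exact hshift.mono fun i hi h ↦ h.2 hi
  refine (finite_iUnion fun k ↦ (hfin k).image fun i ↦ ((i, j), k)).subset ?_
  rintro ⟨⟨i, _⟩, k⟩ ⟨h, rfl⟩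
  exact mem_iUnion.2 ⟨k, i, h, rfl⟩

lemma SplitsRows.finite_row_eq {A : ℤ × ℤ → Prop} (hA : SplitsRows A) {ι : Type*}
    {o : ι → MixedEdge A} (ho : Function.Injective o) (j : ℤ) :
    {n | (o n).1.1.2 = j}.Finite :=
  ((hA.finite_isMixed j).preimage (Subtype.val_injective.comp ho).injOn).subset
    fun n hn ↦ ⟨(o n).2, hn⟩

/-! ### Integer sequences with finite fibres -/

lemma tendsto_atTop_of_bddBelow {u : ℕ → ℤ} (hfin : ∀ j, {n | u n = j}.Finite)
    (hu : BddBelow (range u)) : Tendsto u atTop atTop := by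
  obtain ⟨c, hc⟩ := hu
  have hcof : Tendsto u atTop cofinite :=
    Nat.cofinite_eq_atTop ▸ Tendsto.cofinite_of_finite_preimage_singleton fun j ↦ hfin j
  refine tendsto_atTop.2 fun b ↦ (hcof.eventually (finite_Ico c b).compl_mem_cofinite).mono ?_
  exact fun n hn ↦ not_lt.1 fun h ↦ hn ⟨hc ⟨n, rfl⟩, h⟩

lemma tendsto_atBot_of_not_bddBelow {u : ℕ → ℤ} (hfin : ∀ j, {n | u n = j}.Finite)
    (hstep : ∀ n, u (n + 1) ≤ u n + 1) (hu : ¬ BddBelow (range u)) : Tendsto u atTop atBot := by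
  refine tendsto_atBot.2 fun b ↦ ?_
  have hne : ∀ᶠ n in atTop, u n ≠ b :=
    Nat.cofinite_eq_atTop ▸ eventually_cofinite.2 (by simpa using hfin b)
  have hlt : ∃ᶠ n in atTop, u n < b := fun h ↦ hu
    (IsBoundedUnder.bddBelow_range ⟨b, eventually_map.2 (h.mono fun _ ↦ not_lt.1)⟩)
  obtain ⟨N, hN⟩ := eventually_atTop.1 hne
  obtain ⟨n₀, hn₀, hlt₀⟩ := frequently_atTop.1 hlt N
  filter_upwards [eventually_ge_atTop n₀] with n hn
  suffices u n < b from this.le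
  induction n, hn using Nat.le_induction with
  | base => exact hlt₀
  | succ n hn ih => exact lt_of_le_of_ne (by have := hstep n; omega) (hN _ (by omega))

lemma exists_last_le {u : ℕ → ℤ} (hstep : ∀ n, u (n + 1) ≤ u n + 1) {c : ℤ} (h0 : u 0 ≤ c)
    (hu : Tendsto u atTop atTop) : ∃ m, u m = c ∧ ∀ n, m < n → c < u n := by
  obtain ⟨N, hN⟩ := eventually_atTop.1 (hu.eventually_gt_atTop c)
  have hlast : u (Nat.findGreatest (fun n ↦ u n ≤ c) N) ≤ c :=
    Nat.findGreatest_spec (P := fun n ↦ u n ≤ c) (Nat.zero_le N) h0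
  set m := Nat.findGreatest (fun n ↦ u n ≤ c) N
  have hgt : ∀ n, m < n → c < u n := fun n hn ↦ by
    rcases le_total n N with h | h
    · exact not_le.1 (Nat.findGreatest_is_greatest hn h)
    · exact hN n h
  exact ⟨m, by have := hgt (m + 1) (by omega); have := hstep m; omega, hgt⟩

lemma iterate_eq_iterate {α : Type*} {f g : α → α} {x : α} {n : ℕ}
    (h : ∀ k < n, f (f^[k] x) = g (f^[k] x)) : f^[n] x = g^[n] x := by
  induction n with
  | zero => rfl
  | succ n ih =>
    rw [Function.iterate_succ_apply', Function.iterate_succ_apply', h n n.lt_succ_self,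
      ih fun k hk ↦ h k (by omega)]

lemma injective_zpow_apply {α : Type*} {σ : Equiv.Perm α} {x : α}
    (h : ∀ n : ℕ, (σ ^ (n + 1)) x ≠ x) : Function.Injective fun n : ℤ ↦ (σ ^ n) x := by
  have hpos : ∀ n : ℤ, 0 < n → (σ ^ n) x ≠ x := fun n hn ↦ by
    obtain ⟨k, rfl⟩ := Int.eq_succ_of_zero_lt hn
    exact_mod_cast h k
  have hne : ∀ i j : ℤ, i < j → (σ ^ i) x ≠ (σ ^ j) x := fun i j hij hx ↦ by
    refine hpos (j - i) (sub_pos.2 hij) ?_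
    rw [sub_eq_neg_add, zpow_add, Equiv.Perm.mul_apply, ← hx, ← Equiv.Perm.mul_apply, ← zpow_add,
      neg_add_cancel, zpow_zero, Equiv.Perm.one_apply]
  intro i j hij
  rcases lt_trichotomy i j with hlt | heq | hgt
  · exact absurd hij (hne i j hlt)
  · exact heq
  · exact absurd hij.symm (hne j i hgt)

/-! ### A boundary component joining the two ends -/

/-- The colouring `A`, replaced by the half-plane `0 ≤ v.1` on and below the row `c`. -/
def straighten (A : ℤ × ℤ → Prop) (c : ℤ) (v : ℤ × ℤ) : Prop :=
  (v.2 ≤ c ∧ 0 ≤ v.1) ∨ (c < v.2 ∧ A v)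

section Straighten

variable {A : ℤ × ℤ → Prop} {c : ℤ}

lemma straighten_of_le {v : ℤ × ℤ} (h : v.2 ≤ c) : straighten A c v ↔ 0 ≤ v.1 := by
  simp [straighten, h]

lemma straighten_of_lt {v : ℤ × ℤ} (h : c < v.2) : straighten A c v ↔ A v := by
  simp [straighten, h]

lemma SplitsRows.straighten (hA : SplitsRows A) (c : ℤ) : SplitsRows (straighten A c) := by
  intro j
  rcases le_or_gt j c with h | h
  · simp only [straighten_of_le (v := (_, j)) h, not_le]
    exact ⟨eventually_ge_atTop 0, eventually_lt_atBot 0⟩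
  · simpa only [straighten_of_lt (v := (_, j)) h] using hA j

lemma row_prevEdge_straighten_lt {s : (ℤ × ℤ) × Fin 6} (hs : IsMixed (straighten A c) s)
    (h : s.1.2 < c) : (prevEdge (straighten A c) s).1.2 < c := by
  have hdir : ∀ k, (hexDir k).1 < 0 → (hexDir (k + 1)).2 ≤ 0 := by decide
  have hk := abs_le.1 (abs_hexDir_snd_le s.2)
  have hwest : (hexDir s.2).1 < 0 := by
    have h₁ := (straighten_of_le h.le).1 hs.1
    have h₂ := mt (straighten_of_le (A := A) (v := s.1 + hexDir s.2) (c := c)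
      (by simp only [Prod.snd_add]; omega)).2 hs.2
    simp only [Prod.fst_add] at h₂
    omega
  have := hdir s.2 hwest
  unfold prevEdge
  split_ifs <;> simp only [Prod.snd_add] <;> omega

/-- The edge crossed by the boundary of `straighten A c` as it enters the row `c` from below. -/
def straightEdge (A : ℤ × ℤ → Prop) (c : ℤ) : MixedEdge (straighten A c) :=
  ⟨((0, c), 3), (straighten_of_le le_rfl).2 le_rfl, by
    rw [straighten_of_le (by simp [hexDir])]
    simp [hexDir]⟩

lemma row_inv_boundaryWalk_straightEdge :
    ((boundaryWalk (straighten A c))⁻¹ (straightEdge A c)).1.1.2 = c - 1 := by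
  have h : straighten A c ((0, c) + hexDir (3 + 1)) := by
    rw [straighten_of_le (by simp [hexDir])]
    simp [hexDir]
  change (prevEdge (straighten A c) ((0, c), 3)).1.2 = c - 1
  rw [prevEdge, if_pos h]
  rfl

lemma le_row_boundaryWalk_pow (n : ℕ) :
    c ≤ ((boundaryWalk (straighten A c) ^ n) (straightEdge A c)).1.1.2 := by
  induction n with
  | zero => exact le_rfl
  | succ n ih =>
    by_contra! hlt
    have h := row_prevEdge_straighten_lt (Subtype.prop _) hlt
    rw [pow_succ', Equiv.Perm.mul_apply] at h
    exact ih.not_gt ((prevEdge_nextEdge (Subtype.prop _)) ▸ h)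

lemma injective_boundaryWalk_straightEdge : Function.Injective fun n : ℤ ↦
    (boundaryWalk (straighten A c) ^ n) (straightEdge A c) := by
  refine injective_zpow_apply fun n hn ↦ ?_
  have hback : (boundaryWalk (straighten A c) ^ n) (straightEdge A c) =
      (boundaryWalk (straighten A c))⁻¹ (straightEdge A c) := by
    rw [Equiv.Perm.eq_inv_iff_eq, ← Equiv.Perm.mul_apply, ← pow_succ', hn]
  have hle := le_row_boundaryWalk_pow (A := A) (c := c) n
  rw [hback, row_inv_boundaryWalk_straightEdge] at hle
  omega

lemma exists_last_visit_straighten (hA : SplitsRows A) (hc : c ≤ 0) :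
    ∃ m : ℕ, ((boundaryWalk (straighten A c) ^ m) (straightEdge A c)).1.1.2 = 0 ∧
      ∀ n, m < n → 0 < ((boundaryWalk (straighten A c) ^ n) (straightEdge A c)).1.1.2 := by
  refine exists_last_le (fun n ↦ ?_) hc (tendsto_atTop_of_bddBelow (fun j ↦ ?_) ⟨c, ?_⟩)
  · rw [pow_succ', Equiv.Perm.mul_apply]
    have := (abs_le.1 (abs_row_nextEdge_sub_le (straighten A c)
      ((boundaryWalk (straighten A c) ^ n) (straightEdge A c)))).2
    exact sub_le_iff_le_add'.1 this
  · exact (hA.straighten c).finite_row_eq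
      (injective_boundaryWalk_straightEdge.comp Nat.cast_injective) j
  · rintro _ ⟨n, rfl⟩
    exact le_row_boundaryWalk_pow n

/-- The boundary of `straighten A c` agrees with that of `A` from the last time it leaves the row
`0` on, and also backwards from that time until it comes close to the row `c`. -/
lemma exists_crossing (hA : SplitsRows A) (hc : c ≤ -2) : ∃ e : MixedEdge A, e.1.1.2 = 0 ∧
    (∀ n, 0 < ((boundaryWalk A ^ (n + 1)) e).1.1.2) ∧
      ∃ n, (((boundaryWalk A)⁻¹ ^ n) e).1.1.2 ≤ c + 1 := by
  obtain ⟨m, hm, hlast⟩ := exists_last_visit_straighten hA (by omega : c ≤ 0)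
  have hagree : ∀ s : (ℤ × ℤ) × Fin 6, c + 1 < s.1.2 → ∀ v : ℤ × ℤ, s.1.2 - 1 ≤ v.2 →
      (straighten A c v ↔ A v) := fun s hs v hv ↦ straighten_of_lt (by omega)
  set W := boundaryWalk (straighten A c)
  set e := (W ^ m) (straightEdge A c) with he
  have heA : IsMixed A e := (isMixed_congr (hagree e (by omega))).1 e.2
  have hforward : ∀ n, ((nextEdge (straighten A c))^[n] e) = (W ^ (n + m)) (straightEdge A c) :=
    fun n ↦ by rw [← coe_boundaryWalk_pow, pow_add, Equiv.Perm.mul_apply]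
  have hbackward : (prevEdge (straighten A c))^[m] e = straightEdge A c := by
    rw [← coe_boundaryWalk_inv_pow, he, inv_pow]
    exact congrArg Subtype.val ((W ^ m).symm_apply_apply _)
  refine ⟨⟨e, heA⟩, hm, fun n ↦ ?_, ?_⟩
  · have hrow : ∀ k, 0 ≤ ((nextEdge (straighten A c))^[k] e).1.2 := fun k ↦ by
      rcases k.eq_zero_or_pos with rfl | hk
      · exact hm.ge
      · rw [hforward]
        exact (hlast _ (by omega)).le
    rw [coe_boundaryWalk_pow, ← iterate_eq_iterate fun k _ ↦ nextEdge_congr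
      (hagree _ (show c + 1 < _ from lt_of_lt_of_le (by omega) (hrow k))), hforward]
    exact hlast _ (by omega)
  · by_contra! hfar
    simp only [coe_boundaryWalk_inv_pow] at hfar
    have hstart := hfar m
    rw [iterate_eq_iterate fun k _ ↦ (prevEdge_congr (hagree _ (hfar k))).symm,
      hbackward] at hstart
    exact absurd hstart (by simp [straightEdge])

end Straighten

/-- By pigeonhole one of the finitely many mixed edges on the row `0` serves all depths. -/
lemma SplitsRows.exists_start {A : ℤ × ℤ → Prop} (hA : SplitsRows A) :
    ∃ e : MixedEdge A, e.1.1.2 = 0 ∧ (∀ n, 0 < ((boundaryWalk A ^ (n + 1)) e).1.1.2) ∧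
      ¬ BddBelow (range fun n : ℕ ↦ (((boundaryWalk A)⁻¹ ^ n) e).1.1.2) := by
  have hfin : {e : MixedEdge A | e.1.1.2 = 0}.Finite :=
    hA.finite_row_eq (o := id) Function.injective_id 0
  by_contra! hbdd
  have hdeep : ∀ᶠ c : ℤ in atBot, ∀ e ∈ {e : MixedEdge A | e.1.1.2 = 0},
      (∀ n, 0 < ((boundaryWalk A ^ (n + 1)) e).1.1.2) →
        ∀ n : ℕ, c + 1 < (((boundaryWalk A)⁻¹ ^ n) e).1.1.2 := by
    refine (eventually_all_finite hfin).2 fun e he ↦ ?_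
    by_cases hup : ∀ n, 0 < ((boundaryWalk A ^ (n + 1)) e).1.1.2
    · obtain ⟨b, hb⟩ := hbdd e he hup
      filter_upwards [eventually_lt_atBot (b - 1)] with c hc _ n
      have := hb ⟨n, rfl⟩
      simp only at this
      omega
    · exact Eventually.of_forall fun _ h ↦ absurd h hup
  obtain ⟨c, hc, hc2⟩ := (hdeep.and (eventually_le_atBot (-2))).exists
  obtain ⟨e, he, hup, n, hn⟩ := exists_crossing hA hc2
  exact hn.not_gt (hc e he hup n)

lemma SplitsRows.exists_boundary_path {A : ℤ × ℤ → Prop} (hA : SplitsRows A) :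
    ∃ o : ℤ → MixedEdge A, Function.Injective o ∧ (∀ n, (o (n + 1)).1 = nextEdge A (o n)) ∧
      Tendsto (fun n ↦ (o n).1.1.2) atTop atTop ∧
        Tendsto (fun n ↦ (o n).1.1.2) atBot atBot := by
  obtain ⟨e, he, hup, hdown⟩ := hA.exists_start
  set o : ℤ → MixedEdge A := fun n ↦ (boundaryWalk A ^ n) e
  have hinj : Function.Injective o := injective_zpow_apply fun n hn ↦ by
    have := hup n
    rw [hn] at this
    omega
  have hstep : ∀ n, (o (n + 1)).1 = nextEdge A (o n) := fun n ↦ by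
    simp only [o, add_comm n, zpow_one_add, Equiv.Perm.mul_apply]
    rfl
  refine ⟨o, hinj, hstep, ?_, ?_⟩
  · nth_rewrite 1 [← Nat.map_cast_int_atTop]
    refine tendsto_map'_iff.2 (tendsto_atTop_of_bddBelow
      (hA.finite_row_eq (hinj.comp Nat.cast_injective)) ⟨0, ?_⟩)
    rintro _ ⟨_ | n, rfl⟩
    · exact he.ge
    · exact (hup n).le
  · nth_rewrite 1 [← map_neg_atTop, ← Nat.map_cast_int_atTop]
    rw [tendsto_map'_iff, tendsto_map'_iff]
    refine tendsto_atBot_of_not_bddBelow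
      (hA.finite_row_eq (hinj.comp (neg_injective.comp Nat.cast_injective))) (fun n ↦ ?_) ?_
    · have h := (abs_le.1 (abs_row_nextEdge_sub_le A (o (-((n + 1 : ℕ) : ℤ))))).1
      rw [← hstep, show -((n + 1 : ℕ) : ℤ) + 1 = -(n : ℤ) by push_cast; ring] at h
      simp only [Function.comp_apply]
      omega
    · convert hdown using 3
      ext n
      simp [o]

/-! ### Polygonal lines -/

/-- The polygonal line through the points `v n`, passing through `v n` at time `n`. -/
def polygonalLine {E : Type*} [AddCommGroup E] [Module ℝ E] (v : ℤ → E) (t : ℝ) : E :=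
  AffineMap.lineMap (v ⌊t⌋) (v (⌊t⌋ + 1)) (Int.fract t)

lemma continuous_polygonalLine {E : Type*} [AddCommGroup E] [Module ℝ E] [TopologicalSpace E]
    [IsTopologicalAddGroup E] [ContinuousSMul ℝ E] (v : ℤ → E) :
    Continuous (polygonalLine v) := by
  have hlf : LocallyFinite fun n : ℤ ↦ Icc (n : ℝ) (n + 1) := fun x ↦ by
    refine ⟨Ioo (x - 1) (x + 1), Ioo_mem_nhds (by linarith) (by linarith), ?_⟩
    refine (finite_Icc ⌊x - 2⌋ ⌈x + 1⌉).subset ?_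
    rintro n ⟨y, ⟨hny, hyn⟩, hxy, hyx⟩
    exact ⟨Int.floor_le_iff.2 (by linarith), Int.le_ceil_iff.2 (by linarith)⟩
  refine hlf.continuous (iUnion_eq_univ_iff.2 fun t ↦
    ⟨⌊t⌋, Int.floor_le t, (Int.lt_floor_add_one t).le⟩) (fun _ ↦ isClosed_Icc) fun n ↦ ?_
  have hline : Continuous fun t : ℝ ↦ AffineMap.lineMap (v n) (v (n + 1)) (t - n) := by
    simp only [AffineMap.lineMap_apply_module]
    fun_prop
  refine hline.continuousOn.congr fun t ht ↦ ?_
  rcases ht.2.eq_or_lt with rfl | hlt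
  · simp [polygonalLine]
  · simp [polygonalLine, Int.fract, Int.floor_eq_iff.2 ⟨ht.1, hlt⟩]

/-- The inclusion of the lattice in the plane. -/
def toPlane : ℤ × ℤ →+ Plane := (Int.castAddHom ℝ).prodMap (Int.castAddHom ℝ)

@[simp] lemma toPlane_apply (v : ℤ × ℤ) : toPlane v = ((v.1 : ℝ), (v.2 : ℝ)) := rfl

lemma toPlane_injective : Function.Injective toPlane :=
  Int.cast_injective.prodMap Int.cast_injective

lemma norm_toPlane_hexDir_le (k : Fin 6) : ‖toPlane (hexDir k)‖ ≤ 1 := by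
  have h : |(hexDir k).1| ≤ 1 ∧ |(hexDir k).2| ≤ 1 := by revert k; decide
  simp only [toPlane_apply, Prod.norm_mk, Real.norm_eq_abs]
  exact max_le (mod_cast h.1) (mod_cast h.2)

lemma eq_zero_of_intCast_mem_Ico {σ : ℝ} (hσ : σ ∈ Ico 0 1) {n : ℤ} (h : σ = n) : σ = 0 := by
  rw [← Int.fract_eq_self.2 hσ, h, Int.fract_intCast]

lemma eq_or_swap_of_parallel {p q : ℤ × ℤ} {k : Fin 6} {e : ℤ} (he : e = 1 ∨ e = -1) {σ τ : ℝ}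
    (hσ : σ ∈ Ico 0 1) (hτ : τ ∈ Ico 0 1)
    (h : toPlane p + σ • toPlane (hexDir k) = toPlane q + (τ * e) • toPlane (hexDir k)) :
    p = q ∨ (e = -1 ∧ q = p + hexDir k) := by
  have hprim : ∀ k, ∃ a ∈ Finset.Icc (-1 : ℤ) 1, ∃ b ∈ Finset.Icc (-1 : ℤ) 1,
      a * (hexDir k).1 + b * (hexDir k).2 = 1 := by decide
  obtain ⟨a, -, b, -, hab⟩ := hprim k
  obtain ⟨hx, hy⟩ := Prod.ext_iff.1 h
  simp only [toPlane_apply, Prod.fst_add, Prod.snd_add, Prod.smul_fst, Prod.smul_snd,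
    smul_eq_mul] at hx hy
  have hab' : (a * (hexDir k).1 + b * (hexDir k).2 : ℝ) = 1 := mod_cast hab
  obtain ⟨n, hn⟩ : ∃ n : ℤ, σ - τ * e = n :=
    ⟨a * (q.1 - p.1) + b * (q.2 - p.2), by
      push_cast; linear_combination a * hx + b * hy - (σ - τ * e) * hab'⟩
  have hq : q = p + n • hexDir k := by
    ext <;> simp only [Prod.fst_add, Prod.snd_add, Prod.smul_fst, Prod.smul_snd, smul_eq_mul] <;>
      rify <;> rw [← hn] <;> linarith
  have hn' : n = 0 ∨ (e = -1 ∧ n = 1) := by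
    obtain ⟨hσ0, hσ1⟩ := hσ
    obtain ⟨hτ0, hτ1⟩ := hτ
    rcases he with rfl | rfl <;> push_cast at hn
    · have h₁ : (n : ℝ) < 1 := by linarith
      have h₂ : (-1 : ℝ) < n := by linarith
      norm_cast at h₁ h₂
      omega
    · have h₁ : (n : ℝ) < 2 := by linarith
      have h₂ : (0 : ℝ) ≤ n := by linarith
      norm_cast at h₁ h₂
      omega
  rcases hn' with rfl | ⟨he, rfl⟩
  · exact Or.inl (by simpa using hq.symm)
  · exact Or.inr ⟨he, by simpa using hq⟩

lemma eq_or_swap_of_segments_meet {p q : ℤ × ℤ} {k l : Fin 6} {σ τ : ℝ} (hσ : σ ∈ Ico 0 1)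
    (hτ : τ ∈ Ico 0 1)
    (h : toPlane p + σ • toPlane (hexDir k) = toPlane q + τ • toPlane (hexDir l)) :
    p = q ∨ (q = p + hexDir k ∧ p = q + hexDir l) := by
  have hdirs : ∀ k l, hexDir l = hexDir k ∨ hexDir l = -hexDir k ∨
      ((hexDir k).1 * (hexDir l).2 - (hexDir k).2 * (hexDir l).1) ^ 2 = 1 := by decide
  rcases hdirs k l with hkl | hkl | hdet
  · rw [hkl] at h
    have := eq_or_swap_of_parallel (e := 1) (Or.inl rfl) hσ hτ (by simpa using h)
    exact Or.inl (by simpa using this)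
  · rw [hkl] at h
    have := eq_or_swap_of_parallel (e := -1) (Or.inr rfl) hσ hτ (by simpa using h)
    rcases this with hpq | ⟨-, hq⟩
    · exact Or.inl hpq
    · exact Or.inr ⟨hq, by rw [hkl, hq, add_neg_cancel_right]⟩
  · left
    obtain ⟨hx, hy⟩ := Prod.ext_iff.1 h
    simp only [toPlane_apply, Prod.fst_add, Prod.snd_add, Prod.smul_fst, Prod.smul_snd,
      smul_eq_mul] at hx hy
    set D := (hexDir k).1 * (hexDir l).2 - (hexDir k).2 * (hexDir l).1 with hD
    have hdet' : (((hexDir k).1 * (hexDir l).2 - (hexDir k).2 * (hexDir l).1 : ℝ)) ^ 2 = 1 :=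
      mod_cast hdet
    have hσ0 : σ = 0 := eq_zero_of_intCast_mem_Ico hσ
      (n := D * ((q.1 - p.1) * (hexDir l).2 - (q.2 - p.2) * (hexDir l).1)) (by
        rw [hD]; push_cast; linear_combination
          ((hexDir k).1 * (hexDir l).2 - (hexDir k).2 * (hexDir l).1 : ℝ) *
            ((hexDir l).2 * hx - (hexDir l).1 * hy) - σ * hdet')
    have hτ0 : τ = 0 := eq_zero_of_intCast_mem_Ico hτ
      (n := D * ((q.1 - p.1) * (hexDir k).2 - (q.2 - p.2) * (hexDir k).1)) (by
        rw [hD]; push_cast; linear_combination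
          ((hexDir k).1 * (hexDir l).2 - (hexDir k).2 * (hexDir l).1 : ℝ) *
            ((hexDir k).2 * hx - (hexDir k).1 * hy) - τ * hdet')
    simp only [hσ0, hτ0, zero_mul, add_zero] at hx hy
    exact Prod.ext (mod_cast hx) (mod_cast hy)

section LatticePath

variable {v : ℤ → ℤ × ℤ} {d : ℤ → Fin 6}

lemma polygonalLine_toPlane (hd : ∀ n, v (n + 1) = v n + hexDir (d n)) (t : ℝ) :
    polygonalLine (fun n ↦ toPlane (v n)) t =
      toPlane (v ⌊t⌋) + Int.fract t • toPlane (hexDir (d ⌊t⌋)) := by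
  rw [polygonalLine, hd, map_add, AffineMap.lineMap_apply_module']
  abel_nf

lemma dist_polygonalLine_toPlane_le (hd : ∀ n, v (n + 1) = v n + hexDir (d n)) (t : ℝ) :
    dist (polygonalLine (fun n ↦ toPlane (v n)) t) (toPlane (v ⌊t⌋)) ≤ 1 := by
  rw [polygonalLine_toPlane hd, dist_self_add_left, norm_smul, Real.norm_eq_abs, Int.abs_fract]
  exact mul_le_one₀ (Int.fract_lt_one t).le (norm_nonneg _) (norm_toPlane_hexDir_le _)

lemma injective_polygonalLine_toPlane (hd : ∀ n, v (n + 1) = v n + hexDir (d n))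
    (hv : Function.Injective v) : Function.Injective (polygonalLine fun n ↦ toPlane (v n)) := by
  intro s t hst
  rw [polygonalLine_toPlane hd, polygonalLine_toPlane hd] at hst
  have hfract : ∀ t : ℝ, Int.fract t ∈ Ico 0 1 := fun t ↦
    ⟨Int.fract_nonneg t, Int.fract_lt_one t⟩
  rcases eq_or_swap_of_segments_meet (hfract s) (hfract t) hst with h | ⟨h₁, h₂⟩
  · have hfloor : ⌊s⌋ = ⌊t⌋ := hv h
    have hdir : ∀ k, hexDir k ≠ 0 := by decide
    have hne : toPlane (hexDir (d ⌊t⌋)) ≠ 0 :=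
      (map_ne_zero_iff toPlane toPlane_injective).2 (hdir _)
    rw [hfloor, add_right_inj] at hst
    rw [← Int.floor_add_fract s, ← Int.floor_add_fract t, hfloor, smul_left_injective ℝ hne hst]
  · rw [← hd] at h₁ h₂
    have := hv h₁
    have := hv h₂
    omega

lemma abs_snd_polygonalLine_toPlane_sub_le (hd : ∀ n, v (n + 1) = v n + hexDir (d n)) (t : ℝ) :
    |(polygonalLine (fun n ↦ toPlane (v n)) t).2 - (v ⌊t⌋).2| ≤ 1 :=
  (le_max_right _ _).trans (dist_polygonalLine_toPlane_le hd t)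

lemma tendsto_snd_polygonalLine_atTop (hd : ∀ n, v (n + 1) = v n + hexDir (d n))
    (hN : Tendsto (fun n ↦ (v n).2) atTop atTop) :
    Tendsto (fun t ↦ (polygonalLine (fun n ↦ toPlane (v n)) t).2) atTop atTop := by
  refine tendsto_atTop_mono (f := fun t ↦ ((v ⌊t⌋).2 : ℝ) + -1) (fun t ↦ ?_)
    (tendsto_atTop_add_const_right _ _
      (tendsto_intCast_atTop_iff.2 (hN.comp (tendsto_floor_atTop (α := ℝ)))))
  linarith [(abs_le.1 (abs_snd_polygonalLine_toPlane_sub_le hd t)).1]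

lemma tendsto_snd_polygonalLine_atBot (hd : ∀ n, v (n + 1) = v n + hexDir (d n))
    (hS : Tendsto (fun n ↦ (v n).2) atBot atBot) :
    Tendsto (fun t ↦ (polygonalLine (fun n ↦ toPlane (v n)) t).2) atBot atBot := by
  refine tendsto_atBot_mono (f := fun t ↦ ((v ⌊t⌋).2 : ℝ) + 1) (fun t ↦ ?_)
    (tendsto_atBot_add_const_right _ _
      (tendsto_intCast_atBot_iff.2 (hS.comp (tendsto_floor_atBot (α := ℝ)))))
  linarith [(abs_le.1 (abs_snd_polygonalLine_toPlane_sub_le hd t)).2]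

end LatticePath

/-- Twice the midpoint of an edge of the triangular lattice. -/
def medial (s : (ℤ × ℤ) × Fin 6) : ℤ × ℤ := s.1 + s.1 + hexDir s.2

lemma exists_medial_nextEdge (A : ℤ × ℤ → Prop) (s : (ℤ × ℤ) × Fin 6) :
    ∃ k, medial (nextEdge A s) = medial s + hexDir k := by
  obtain ⟨v, k⟩ := s
  unfold nextEdge medial
  split_ifs
  · refine ⟨k - 1, ?_⟩
    have hk := hexDir_sub_one_add_hexDir_add_one k
    dsimp only
    rw [← hk]
    abel
  · refine ⟨k - 1 - 1, ?_⟩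
    have hk := hexDir_sub_one_add_hexDir_add_one (k - 1)
    rw [sub_add_cancel] at hk
    dsimp only
    rw [← hk]
    abel

lemma injective_medial (A : ℤ × ℤ → Prop) :
    Function.Injective fun s : MixedEdge A ↦ medial s := by
  rintro ⟨⟨⟨a, b⟩, k⟩, hs⟩ ⟨⟨⟨a', b'⟩, l⟩, ht⟩ h
  have hparity : ∀ k l, ((hexDir k).1 - (hexDir l).1) % 2 = 0 →
      ((hexDir k).2 - (hexDir l).2) % 2 = 0 → k = l ∨ hexDir l = -hexDir k := by decide
  obtain ⟨hx, hy⟩ := Prod.ext_iff.1 h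
  simp only [medial, Prod.fst_add, Prod.snd_add] at hx hy
  rcases hparity k l (by omega) (by omega) with rfl | hl
  · obtain rfl : a = a' := by omega
    obtain rfl : b = b' := by omega
    rfl
  · simp only [hl, Prod.fst_neg, Prod.snd_neg] at hx hy
    have hend : ((a, b) : ℤ × ℤ) + hexDir k = (a', b') := by
      ext <;> simp only [Prod.fst_add, Prod.snd_add] <;> omega
    exact absurd ht.1 (hend ▸ hs.2)

lemma SplitsRows.exists_boundary_line {A : ℤ × ℤ → Prop} (hA : SplitsRows A) :
    ∃ Γ : ℝ → Plane, Continuous Γ ∧ Function.Injective Γ ∧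
      Tendsto (fun t ↦ (Γ t).2) atTop atTop ∧ Tendsto (fun t ↦ (Γ t).2) atBot atBot ∧
      ∀ t, ∃ c v w, A v ∧ ¬ A w ∧ toPlane (v + v) ∈ Metric.closedBall c 1 ∧
        toPlane (w + w) ∈ Metric.closedBall c 1 ∧ Γ t ∈ Metric.closedBall c 1 := by
  obtain ⟨o, hinj, hnext, hN, hS⟩ := hA.exists_boundary_path
  have hstep : ∀ n, ∃ k, medial (o (n + 1)) = medial (o n) + hexDir k := fun n ↦ by
    rw [hnext]
    exact exists_medial_nextEdge A (o n)
  choose d hd using hstep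
  have hrow : ∀ n, |(medial (o n)).2 - 2 * (o n).1.1.2| ≤ 1 := fun n ↦ by
    convert abs_hexDir_snd_le (o n).1.2 using 2
    simp only [medial, Prod.snd_add]
    ring
  refine ⟨polygonalLine fun n ↦ toPlane (medial (o n)), continuous_polygonalLine _,
    injective_polygonalLine_toPlane hd ((injective_medial A).comp hinj),
    tendsto_snd_polygonalLine_atTop hd (tendsto_atTop.2 fun b ↦ ?_),
    tendsto_snd_polygonalLine_atBot hd (tendsto_atBot.2 fun b ↦ ?_), fun t ↦ ?_⟩
  · filter_upwards [tendsto_atTop.1 hN (|b| + 1)] with n hn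
    linarith [(abs_le.1 (hrow n)).1, le_abs_self b, abs_nonneg b]
  · filter_upwards [tendsto_atBot.1 hS (-|b| - 1)] with n hn
    linarith [(abs_le.1 (hrow n)).2, neg_abs_le b, abs_nonneg b]
  · refine ⟨toPlane (medial (o ⌊t⌋)), _, _, (o ⌊t⌋).2.1, (o ⌊t⌋).2.2, ?_, ?_,
      dist_polygonalLine_toPlane_le hd t⟩
    · rw [Metric.mem_closedBall, medial, map_add _ (_ + _), dist_self_add_right]
      exact norm_toPlane_hexDir_le _
    · rw [Metric.mem_closedBall, medial, add_add_add_comm, ← add_assoc, map_add _ (_ + _ + _),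
        dist_self_add_left]
      exact norm_toPlane_hexDir_le _

/-! ### Rescaling the plane -/

lemma uniformContinuousOn_strip {k : Plane → ℝ} {c d : ℝ → ℝ} {a b : ℝ} (hk : Continuous k)
    (hc : Continuous c) (hd : Continuous d) (hwest : ∀ p ∈ west c, k p = a)
    (heast : ∀ p ∈ east d, k p = b) (R : ℝ) : UniformContinuousOn k (univ ×ˢ Icc (-R) R) := by
  obtain ⟨C, hC⟩ := (isCompact_Icc (a := -R) (b := R)).bddAbove_image
    (f := fun y ↦ |c y| + |d y| + 1) (by fun_prop)
  have hcd (y) (hy : y ∈ Icc (-R) R) : -C < c y ∧ d y < C ∧ 0 < C := by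
    have : |c y| + |d y| + 1 ≤ C := hC (mem_image_of_mem _ hy)
    have := abs_nonneg (c y)
    have := abs_nonneg (d y)
    have := neg_abs_le (c y)
    have := le_abs_self (d y)
    exact ⟨by linarith, by linarith, by linarith⟩
  have hK : UniformContinuousOn k (Icc (-C) C ×ˢ Icc (-R) R) :=
    (isCompact_Icc.prod isCompact_Icc).uniformContinuousOn_of_continuous hk.continuousOn
  have hclamp : UniformContinuous fun x ↦ max (-C) (min C x) :=
    ((LipschitzWith.id.const_min C).const_max (-C)).uniformContinuous
  refine (hK.comp (hclamp.prodMap uniformContinuous_id).uniformContinuousOn ?_).congr ?_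
  · rintro ⟨x, y⟩ ⟨-, hy⟩
    exact ⟨⟨le_max_left _ _, max_le (by linarith [(hcd y hy).2.2]) (min_le_left _ _)⟩, hy⟩
  · rintro ⟨x, y⟩ ⟨-, hy⟩
    obtain ⟨hcy, hdy, hC0⟩ := hcd y hy
    change k (max (-C) (min C x), y) = k (x, y)
    rcases le_total x (-C) with hx | hx
    · rw [min_eq_right (by linarith), max_eq_left hx, hwest (-C, y) hcy,
        hwest (x, y) (hx.trans_lt hcy)]
    · rcases le_total x C with hx' | hx'
      · rw [min_eq_right hx', max_eq_right hx]
      · rw [min_eq_left hx', max_eq_right (by linarith), heast (C, y) hdy,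
          heast (x, y) (hdy.trans_le hx')]

lemma exists_modulus {k : Plane → ℝ} (hk : ∀ R, UniformContinuousOn k (univ ×ˢ Icc (-R) R))
    {ε : ℝ} (hε : 0 < ε) :
    ∃ r : ℝ → ℝ, Continuous r ∧ (∀ y, r y ∈ Ioc 0 1) ∧
      ∀ p q, dist p q ≤ r p.2 → dist (k p) (k q) ≤ ε := by
  let T (y : ℝ) : Set ℝ :=
    {ρ | ρ ∈ Ioc 0 1 ∧ ∀ x q, dist (x, y) q ≤ ρ → dist (k (x, y)) (k q) ≤ ε}
  have hconv (y : ℝ) : Convex ℝ (T y) := OrdConnected.convex ⟨fun _ hρ _ hρ' _ hσ ↦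
    ⟨⟨hρ.1.1.trans_le hσ.1, hσ.2.trans hρ'.1.2⟩, fun x q hq ↦ hρ'.2 x q (hq.trans hσ.2)⟩⟩
  have hloc (y : ℝ) : ∃ ρ, ∀ᶠ y' in 𝓝 y, ρ ∈ T y' := by
    obtain ⟨δ, hδ, hkδ⟩ := Metric.uniformContinuousOn_iff.1 (hk (|y| + 2)) ε hε
    refine ⟨min (δ / 2) 1, ?_⟩
    filter_upwards [(continuous_abs.tendsto y).eventually_lt_const (lt_add_one |y|)] with y' hy'
    refine ⟨⟨lt_min (half_pos hδ) one_pos, min_le_right _ _⟩, fun x q hq ↦ ?_⟩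
    have hq₂ : |q.2 - y'| ≤ 1 := by
      rw [← Real.dist_eq, dist_comm]
      exact (le_max_right _ _).trans (hq.trans (min_le_right _ _))
    have := abs_sub_abs_le_abs_sub q.2 y'
    exact (hkδ (x, y') ⟨mem_univ _, abs_le.1 (by linarith)⟩ q
      ⟨mem_univ _, abs_le.1 (by linarith)⟩
      ((hq.trans (min_le_left _ _)).trans_lt (half_lt_self hδ))).le
  obtain ⟨r, hr⟩ := exists_continuous_forall_mem_convex_of_local_const hconv hloc
  exact ⟨r, r.continuous, fun y ↦ (hr y).1, fun p q ↦ (hr p.2).2 p.1 q⟩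

lemma exists_orderIso_hasDerivAt {N : ℝ → ℝ} (hN : Continuous N) (hN₁ : ∀ y, 1 ≤ N y) :
    ∃ e : ℝ ≃o ℝ, ∀ y, HasDerivAt e (N y) y := by
  set M : ℝ → ℝ := fun y ↦ ∫ t in (0 : ℝ)..y, N t
  have hM (y) : HasDerivAt M (N y) y := (hN.integral_hasStrictDerivAt 0 y).hasDerivAt
  have hdiff : Differentiable ℝ M := fun y ↦ (hM y).differentiableAt
  have hexp : ∀ ⦃x y⦄, x ≤ y → 1 * (y - x) ≤ M y - M x :=
    mul_sub_le_image_sub_of_le_deriv hdiff fun y ↦ (hM y).deriv.symm ▸ hN₁ y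
  have hmono : StrictMono M := fun x y hxy ↦ by linarith [hexp hxy.le]
  have htop : Tendsto M atTop atTop := by
    refine tendsto_atTop_mono' _ ?_ (tendsto_atTop_add_const_left _ (M 0) tendsto_id)
    filter_upwards [eventually_ge_atTop 0] with y hy
    simp only [id]
    linarith [hexp hy]
  have hbot : Tendsto M atBot atBot := by
    refine tendsto_atBot_mono' _ ?_ (tendsto_atBot_add_const_left _ (M 0) tendsto_id)
    filter_upwards [eventually_le_atBot 0] with y hy
    simp only [id]
    linarith [hexp hy]
  exact ⟨hmono.orderIsoOfSurjective M (hdiff.continuous.surjective htop hbot), hM⟩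

lemma exists_scale {r : ℝ → ℝ} (hr : Continuous r) (hr₁ : ∀ y, r y ∈ Ioc 0 1) :
    ∃ b : ℝ ≃o ℝ, ∀ v v', |v - v'| ≤ 1 → ∃ ξ, |b v - ξ| ≤ r ξ ∧ |b v' - ξ| ≤ r ξ := by
  have hr₀ (y) : 0 < r y := (hr₁ y).1
  obtain ⟨e, he⟩ := exists_orderIso_hasDerivAt (hr.inv₀ fun y ↦ (hr₀ y).ne')
    fun y ↦ (one_le_inv₀ (hr₀ y)).2 (hr₁ y).2
  refine ⟨e.symm, fun v v' hv ↦ ?_⟩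
  wlog hlt : v ≤ v' generalizing v v'
  · obtain ⟨ξ, h, h'⟩ := this v' v (abs_sub_comm v v' ▸ hv) (le_of_not_ge hlt)
    exact ⟨ξ, h', h⟩
  obtain ⟨x, rfl⟩ := e.surjective v
  obtain ⟨x', rfl⟩ := e.surjective v'
  simp only [OrderIso.symm_apply_apply]
  rcases (e.le_iff_le.1 hlt).eq_or_lt with rfl | hx
  · exact ⟨x, by simpa using (hr₀ x).le, by simpa using (hr₀ x).le⟩
  obtain ⟨ξ, ⟨hxξ, hξx⟩, hξ⟩ := exists_hasDerivAt_eq_slope e (fun y ↦ (r y)⁻¹) hx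
    e.continuous.continuousOn fun y _ ↦ he y
  have hle : x' - x ≤ r ξ := by
    rw [inv_eq_iff_eq_inv, inv_div] at hξ
    rw [hξ, le_div_iff₀ (sub_pos.2 (e.lt_iff_lt.2 hx))]
    exact mul_le_of_le_one_right (sub_pos.2 hx).le (by linarith [(abs_le.1 hv).1])
  exact ⟨ξ, abs_le.2 ⟨by linarith, by linarith⟩, abs_le.2 ⟨by linarith, by linarith⟩⟩

/-- The change of variables that applies `b` to the heights and then stretches the horizontal line
of height `y` by the factor `r y`. -/
def rescale (r : ℝ → ℝ) (b : ℝ ≃o ℝ) (p : Plane) : Plane := (r (b p.2) * p.1, b p.2)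

section Rescale

variable {r : ℝ → ℝ} (b : ℝ ≃o ℝ)

lemma continuous_rescale (hr : Continuous r) : Continuous (rescale r b) :=
  ((hr.comp (b.continuous.comp continuous_snd)).mul continuous_fst).prodMk
    (b.continuous.comp continuous_snd)

lemma injective_rescale (hr : ∀ y, 0 < r y) : Function.Injective (rescale r b) := by
  rintro ⟨x, y⟩ ⟨x', y'⟩ h
  obtain rfl : y = y' := b.injective (congrArg Prod.snd h)
  exact congrArg (·, y) (mul_left_cancel₀ (hr (b y)).ne' (congrArg Prod.fst h))

lemma eventually_rescale_mem_west (hr : ∀ y, 0 < r y) (c : ℝ → ℝ) (y : ℝ) :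
    ∀ᶠ x in atBot, rescale r b (x, y) ∈ west c :=
  (tendsto_id.const_mul_atBot (hr (b y))).eventually_lt_atBot (c (b y))

lemma eventually_rescale_mem_east (hr : ∀ y, 0 < r y) (c : ℝ → ℝ) (y : ℝ) :
    ∀ᶠ x in atTop, rescale r b (x, y) ∈ east c :=
  (tendsto_id.const_mul_atTop (hr (b y))).eventually_gt_atTop (c (b y))

end Rescale

lemma exists_rescale {k : Plane → ℝ} {c d : ℝ → ℝ} {a b : ℝ} (hk : Continuous k)
    (hc : Continuous c) (hd : Continuous d) (hwest : ∀ p ∈ west c, k p = a)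
    (heast : ∀ p ∈ east d, k p = b) {ε : ℝ} (hε : 0 < ε) :
    ∃ (r : ℝ → ℝ) (e : ℝ ≃o ℝ), Continuous r ∧ (∀ y, 0 < r y) ∧
      ∀ p q, dist p q ≤ 1 → dist (k (rescale r e p)) (k (rescale r e q)) ≤ ε := by
  have hε₃ : 0 < ε / 3 := by positivity
  obtain ⟨r, hr, hr₁, hkr⟩ := exists_modulus (uniformContinuousOn_strip hk hc hd hwest heast) hε₃
  have hr₀ (y) : 0 < r y := (hr₁ y).1
  set k' : Plane → ℝ := fun p ↦ k (r p.2 * p.1, p.2)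
  have hk' : Continuous k' := by fun_prop
  have hwest' (p) (hp : p ∈ west fun y ↦ c y / r y) : k' p = a :=
    hwest _ ((lt_div_iff₀' (hr₀ p.2)).1 hp)
  have heast' (p) (hp : p ∈ east fun y ↦ d y / r y) : k' p = b :=
    heast _ ((div_lt_iff₀' (hr₀ p.2)).1 hp)
  obtain ⟨s, hs, hs₁, hks⟩ := exists_modulus (uniformContinuousOn_strip hk'
    (hc.div hr fun y ↦ (hr₀ y).ne') (hd.div hr fun y ↦ (hr₀ y).ne') hwest' heast') hε₃
  obtain ⟨e, he⟩ := exists_scale hs hs₁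
  refine ⟨r, e, hr, hr₀, fun p q hpq ↦ ?_⟩
  obtain ⟨hpq₁, hpq₂⟩ := max_le_iff.1 hpq
  obtain ⟨ξ, hp, hq⟩ := he p.2 q.2 hpq₂
  have hvert (y) (hy : |y - ξ| ≤ s ξ) : dist (k' (p.1, ξ)) (k' (p.1, y)) ≤ ε / 3 :=
    hks (p.1, ξ) _ (by simpa [Prod.dist_eq, Real.dist_eq, abs_sub_comm ξ, (hs₁ ξ).1.le] using hy)
  have hhor : dist (k' (p.1, e q.2)) (k' (q.1, e q.2)) ≤ ε / 3 := by
    refine hkr _ _ ?_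
    rw [Prod.dist_eq, dist_self, max_eq_left dist_nonneg, Real.dist_eq, ← mul_sub, abs_mul,
      abs_of_pos (hr₀ _)]
    exact mul_le_of_le_one_right (hr₀ _).le hpq₁
  calc dist (k' (p.1, e p.2)) (k' (q.1, e q.2))
      ≤ dist (k' (p.1, ξ)) (k' (p.1, e p.2)) + dist (k' (p.1, ξ)) (k' (p.1, e q.2)) +
          dist (k' (p.1, e q.2)) (k' (q.1, e q.2)) := by
        rw [dist_comm (k' (p.1, ξ)) (k' (p.1, e p.2))]
        exact dist_triangle4 _ _ _ _
    _ ≤ ε := by linarith [hvert _ hp, hvert _ hq]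

/-! ### A line in a thin slab of a function -/

lemma splitsRows_rescale_mem_Rset {h : Plane → ℝ} {c d : ℝ → ℝ} {m : ℝ} (hd : Continuous d)
    (hwest : ∀ p ∈ west c, h p ≤ m) (heast : ∀ p ∈ east d, m < h p) {r : ℝ → ℝ}
    (hr : ∀ y, 0 < r y) (e : ℝ ≃o ℝ) :
    SplitsRows fun v ↦ rescale r e (toPlane (v + v)) ∈ Rset {p | h p ≤ m} := by
  intro j
  have hcoord (i : ℤ) : toPlane ((i, j) + (i, j)) = ((i : ℝ) + i, (j : ℝ) + j) := by simp
  simp only [hcoord, Rset_eq_farSide]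
  constructor
  · have htop : Tendsto (fun i : ℤ ↦ (i + i : ℝ)) atTop atTop :=
      tendsto_intCast_atTop_atTop.atTop_add_atTop tendsto_intCast_atTop_atTop
    filter_upwards [htop.eventually (eventually_rescale_mem_east e hr d _)] with i hi
    exact subset_farSide (isPreconnected_east hd)
      (disjoint_left.2 fun p hp ↦ not_le.2 (heast p hp))
      (eventually_apply_mem_east (.one_left deck) hd) hi
  · have hcast : Tendsto (fun i : ℤ ↦ (i : ℝ)) atBot atBot := tendsto_intCast_atBot_iff.2 tendsto_id
    filter_upwards [(hcast.atBot_add_atBot hcast).eventually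
      (eventually_rescale_mem_west e hr c _)] with i hi hR
    exact disjoint_left.1 disjoint_farSide hR (hwest _ hi)

lemma mem_Ioo_and_subset_Rset {h : Plane → ℝ} {δ : ℝ} (hδ : 0 < δ) {Q : Set Plane}
    (hQ : IsPreconnected Q)
    (hosc : ∀ p ∈ Q, ∀ q ∈ Q, dist (max 0 (min δ (h p))) (max 0 (min δ (h q))) < δ / 2)
    (hin : (Q ∩ Rset {p | h p ≤ δ / 2}).Nonempty) (hout : ¬ Q ⊆ Rset {p | h p ≤ δ / 2}) :
    (∀ p ∈ Q, h p ∈ Ioo 0 δ) ∧ Q ⊆ Rset {p | h p ≤ 0} := by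
  rw [Rset_eq_farSide] at hin hout ⊢
  obtain ⟨p, hpQ, hp⟩ : ∃ p ∈ Q, h p ≤ δ / 2 := by
    by_contra! hQh
    exact hout (subset_farSide_of_inter_nonempty hQ
      (disjoint_left.2 fun p hp ↦ not_le.2 (hQh p hp)) hin)
  obtain ⟨q, hqQ, hq⟩ := hin
  have hqh : δ / 2 < h q := not_le.1 (disjoint_left.1 disjoint_farSide hq)
  have hIoo (x) (hx : x ∈ Q) : h x ∈ Ioo 0 δ := by
    have hpx := (abs_lt.1 (hosc x hx p hpQ)).2
    have hqx := (abs_lt.1 (hosc x hx q hqQ)).1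
    have hkp : max 0 (min δ (h p)) ≤ δ / 2 := max_le (by linarith) ((min_le_right _ _).trans hp)
    have hkq : δ / 2 ≤ max 0 (min δ (h q)) := le_max_of_le_right (le_min (by linarith) hqh.le)
    constructor
    · by_contra! h0
      rw [max_eq_left ((min_le_right δ _).trans h0)] at hqx
      linarith
    · by_contra! h0
      rw [min_eq_left h0, max_eq_right hδ.le] at hpx
      linarith
  refine ⟨hIoo, subset_farSide_of_inter_nonempty hQ
    (disjoint_left.2 fun x hx ↦ not_le.2 (hIoo x hx).1) ⟨q, hqQ, farSide_anti ?_ hq⟩⟩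
  exact fun x (hx : h x ≤ 0) ↦ hx.trans (half_pos hδ).le

lemma exists_line_mem_Ioo {h : Plane → ℝ} (hh : Continuous h) {c d : ℝ → ℝ} (hc : Continuous c)
    (hd : Continuous d) {δ : ℝ} (hδ : 0 < δ) (hwest : ∀ p ∈ west c, h p ≤ 0)
    (heast : ∀ p ∈ east d, δ ≤ h p) :
    ∃ Γ : ℝ → Plane, Continuous Γ ∧ Function.Injective Γ ∧
      Tendsto (fun t ↦ (Γ t).2) atTop atTop ∧ Tendsto (fun t ↦ (Γ t).2) atBot atBot ∧
      (∀ t, h (Γ t) ∈ Ioo 0 δ) ∧ range Γ ⊆ Rset {p | h p ≤ 0} := by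
  set k : Plane → ℝ := fun p ↦ max 0 (min δ (h p)) with hk
  have hkwest (p) (hp : p ∈ west c) : k p = 0 :=
    max_eq_left ((min_le_right _ _).trans (hwest p hp))
  have hkeast (p) (hp : p ∈ east d) : k p = δ := by
    simp only [hk, min_eq_left (heast p hp), max_eq_right hδ.le]
  obtain ⟨r, e, hr, hr₀, hosc⟩ := exists_rescale (by fun_prop) hc hd hkwest hkeast
    (by positivity : 0 < δ / 5)
  have hA := splitsRows_rescale_mem_Rset (m := δ / 2) hd
    (fun p hp ↦ (hwest p hp).trans (half_pos hδ).le)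
    (fun p hp ↦ (half_lt_self hδ).trans_le (heast p hp)) hr₀ e
  obtain ⟨L, hL, hLinj, hN, hS, hball⟩ := hA.exists_boundary_line
  have hslab (t) : h (rescale r e (L t)) ∈ Ioo 0 δ ∧ rescale r e (L t) ∈ Rset {p | h p ≤ 0} := by
    obtain ⟨z, v, w, hv, hw, hvz, hwz, hLz⟩ := hball t
    have hQ : IsPreconnected (rescale r e '' Metric.closedBall z 1) :=
      (convex_closedBall z 1).isPreconnected.image _ (continuous_rescale e hr).continuousOn
    have hQosc : ∀ p ∈ rescale r e '' Metric.closedBall z 1,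
        ∀ q ∈ rescale r e '' Metric.closedBall z 1, dist (k p) (k q) < δ / 2 := by
      rintro _ ⟨p, hp, rfl⟩ _ ⟨q, hq, rfl⟩
      linarith [dist_triangle_right (k (rescale r e p)) (k (rescale r e q)) (k (rescale r e z)),
        hosc p z hp, hosc q z hq]
    obtain ⟨hIoo, hR⟩ := mem_Ioo_and_subset_Rset hδ hQ hQosc ⟨_, mem_image_of_mem _ hvz, hv⟩
      fun hsub ↦ hw (hsub (mem_image_of_mem _ hwz))
    exact ⟨hIoo _ (mem_image_of_mem _ hLz), hR (mem_image_of_mem _ hLz)⟩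
  exact ⟨rescale r e ∘ L, (continuous_rescale e hr).comp hL, (injective_rescale e hr₀).comp hLinj,
    e.tendsto_atTop.comp hN, e.tendsto_atBot.comp hS, fun t ↦ (hslab t).1,
    range_subset_iff.2 fun t ↦ (hslab t).2⟩

/-! ### Lines moved in one direction -/

lemma isProperMap_of_tendsto_snd {X : Type*} [TopologicalSpace X] [T2Space X] {γ : ℝ → X × ℝ}
    (hγ : Continuous γ) (hN : Tendsto (fun t ↦ (γ t).2) atTop atTop)
    (hS : Tendsto (fun t ↦ (γ t).2) atBot atBot) : IsProperMap γ := by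
  refine isProperMap_of_comp_of_t2 hγ continuous_snd
    (isProperMap_iff_tendsto_cocompact.2 ⟨continuous_snd.comp hγ, ?_⟩)
  rw [cocompact_eq_atBot_atTop]
  exact hS.sup_sup hN

lemma injective_prj_comp {h : Plane → ℝ} (hdeck : ∀ p, h (deck p) = h p + 1) {Γ : ℝ → Plane}
    (hinj : Function.Injective Γ) (hIoo : ∀ t, h (Γ t) ∈ Ioo 0 1) :
    Function.Injective (prj ∘ Γ) := by
  intro s t hst
  obtain ⟨n, hn⟩ := exists_Tr_eq_of_prj_eq hst
  have hsn : h (Γ s) = h (Γ t) + n := hn ▸ add_intCast_of_deck hdeck n (Γ t)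
  obtain ⟨hs0, hs1⟩ := hIoo s
  obtain ⟨ht0, ht1⟩ := hIoo t
  have hn₁ : (n : ℝ) < 1 := by linarith
  have hn₂ : (-1 : ℝ) < n := by linarith
  norm_cast at hn₁ hn₂
  obtain rfl : n = 0 := by omega
  exact hinj (by simpa [Tr] using hn)

section Displacement

variable {h : Plane → ℝ} {c d : ℝ → ℝ} {δ : ℝ} {Γ : ℝ → Plane}

lemma lineLT_image_range {Θ : Plane ≃ₜ Plane} (hc : Continuous c) (hd : Continuous d)
    (hwest : ∀ p ∈ west c, h p ≤ 0) (heast : ∀ p ∈ east d, δ ≤ h p) (hΓ : Continuous Γ)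
    (hN : Tendsto (fun t ↦ (Γ t).2) atTop atTop) (hS : Tendsto (fun t ↦ (Γ t).2) atBot atBot)
    (hIoo : ∀ t, h (Γ t) ∈ Ioo 0 δ) (hR : range Γ ⊆ Rset {p | h p ≤ 0}) (hΘ : Commute Θ deck)
    (hΘh : ∀ p, h p + δ ≤ h (Θ p)) : lineLT (range Γ) (Θ '' range Γ) := by
  have hδ : 0 < δ := (hIoo 0).1.trans (hIoo 0).2
  have hcl : IsClosed (range Γ) := (isProperMap_of_tendsto_snd hΓ hN hS).isClosed_range
  have hwestΓ : Disjoint (west c) (range Γ) := disjoint_right.2 <| by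
    rintro _ ⟨t, rfl⟩ ht
    exact (hwest _ ht).not_gt (hIoo t).1
  have heast₀ : Disjoint (east d) {p | h p ≤ 0} :=
    disjoint_left.2 fun p hp ↦ not_le.2 (hδ.trans_le (heast p hp))
  have hΓΘ : range Γ ⊆ Θ '' {p | h p ≤ 0} := by
    rintro _ ⟨t, rfl⟩
    have hle := hΘh (Θ.symm (Γ t))
    rw [Θ.apply_symm_apply] at hle
    have h0 : h (Θ.symm (Γ t)) ≤ 0 := by linarith [(hIoo t).2]
    exact ⟨_, h0, Θ.apply_symm_apply _⟩
  refine lineLT_of_subset_Rset hcl (disjoint_Lset_Rset_range hΓ hcl hN hS)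
    (eventually_mem_Lset hc hwestΓ) ?_
  calc Θ '' range Γ ⊆ Θ '' Rset {p | h p ≤ 0} := image_mono hR
    _ = Rset (Θ '' {p | h p ≤ 0}) := image_Rset hΘ hd heast₀
    _ ⊆ Rset (range Γ) := by
      simp only [Rset_eq_farSide]
      exact farSide_anti hΓΘ

lemma lineLT_image_image_range {G H : Plane ≃ₜ Plane} (hc : Continuous c) (hd : Continuous d)
    (hwest : ∀ p ∈ west c, h p ≤ 0) (heast : ∀ p ∈ east d, δ ≤ h p) (hΓ : Continuous Γ)
    (hN : Tendsto (fun t ↦ (Γ t).2) atTop atTop) (hS : Tendsto (fun t ↦ (Γ t).2) atBot atBot)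
    (hIoo : ∀ t, h (Γ t) ∈ Ioo 0 δ) (hR : range Γ ⊆ Rset {p | h p ≤ 0}) (hG : Commute G deck)
    (hH : Commute H deck) (hGH : ∀ p, h p + δ ≤ h (G.symm (H p))) :
    lineLT (G '' range Γ) (H '' range Γ) := by
  have hΘ : Commute (G⁻¹ * H) deck := hG.inv_left.mul_left hH
  have hlt := lineLT_image_range hc hd hwest heast hΓ hN hS hIoo hR hΘ hGH
  have hH' : G '' ((G⁻¹ * H : Plane ≃ₜ Plane) '' range Γ) = H '' range Γ :=
    (image_image _ _ _).trans (image_congr fun p _ ↦ G.apply_symm_apply (H p))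
  rw [← hH']
  refine lineLT_image hG hc (disjoint_right.2 ?_) hc (disjoint_right.2 ?_) hlt
  · rintro _ ⟨t, rfl⟩ ht
    exact (hwest _ ht).not_gt (hIoo t).1
  · rintro _ ⟨_, ⟨t, rfl⟩, rfl⟩ ht
    have hle : h (Γ t) + δ ≤ 0 := (hGH _).trans (hwest _ ht)
    linarith [(hIoo t).1, (hIoo t).2]

end Displacement

lemma exists_essLine_lineLT_of_height {h : Plane → ℝ} (hh : Continuous h)
    (hdeck : ∀ p, h (deck p) = h p + 1) {δ : ℝ} (hδ : 0 < δ) (hδ₁ : δ ≤ 1) :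
    ∃ Γ : ℝ → Plane, IsEssLinePlane Γ ∧ IsEssLineAnnSN (prj ∘ Γ) ∧
      ∀ G H : Plane ≃ₜ Plane, Commute G deck → Commute H deck →
        (∀ p, h p + δ ≤ h (G.symm (H p))) → lineLT (G '' range Γ) (H '' range Γ) := by
  obtain ⟨g, hg, hhg⟩ := exists_abs_sub_fst_le hh hdeck
  have hwest (p) (hp : p ∈ west fun y ↦ -g y) : h p ≤ 0 := by
    linarith [(abs_le.1 (hhg p)).2, show p.1 < -g p.2 from hp]
  have heast (p) (hp : p ∈ east fun y ↦ g y + δ) : δ ≤ h p := by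
    linarith [(abs_le.1 (hhg p)).1, show g p.2 + δ < p.1 from hp]
  obtain ⟨Γ, hΓ, hinj, hN, hS, hIoo, hR⟩ :=
    exists_line_mem_Ioo hh (by fun_prop) (by fun_prop) hδ hwest heast
  have hprj : Continuous (prj ∘ Γ) := continuous_prj.comp hΓ
  exact ⟨Γ, ⟨hΓ, hinj, isProperMap_of_tendsto_snd hΓ hN hS, hN, hS⟩,
    ⟨hprj, injective_prj_comp hdeck hinj fun t ↦ ⟨(hIoo t).1, (hIoo t).2.trans_le hδ₁⟩,
      isProperMap_of_tendsto_snd hprj hN hS, hN, hS⟩,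
    fun G H ↦ lineLT_image_image_range (by fun_prop) (by fun_prop) hwest heast hΓ hN hS hIoo hR⟩

theorem bounded_weak_rotation_set_line_general (F : Plane ≃ₜ Plane) (hF : Commute F deck)
    {a b : ℝ} (hab : a ≤ b) (hsub : RotWeak F ⊆ Icc (a : EReal) b) {m n : ℤ} (hm : m < a)
    (hn : b < n) :
    ∃ Γ : ℝ → Plane, IsEssLinePlane Γ ∧ IsEssLineAnnSN (prj ∘ Γ) ∧
      lineLT (Tr m '' range Γ) (F '' range Γ) ∧ lineLT (F '' range Γ) (Tr n '' range Γ) := by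
  obtain ⟨δ, hδ, hδ₁, hδm, hδn⟩ : ∃ δ > 0, δ ≤ 1 ∧ m + δ ≤ a - δ ∧ b + δ ≤ n - δ := by
    refine ⟨min 1 (min ((a - m) / 2) ((n - b) / 2)), lt_min one_pos (lt_min ?_ ?_),
      min_le_left _ _, ?_, ?_⟩ <;> grind
  obtain ⟨h, hh, hdeck, hdisp⟩ := exists_height hF hab hδ hsub
  obtain ⟨Γ, hΓ, hΓprj, hlt⟩ := exists_essLine_lineLT_of_height hh hdeck hδ hδ₁
  refine ⟨Γ, hΓ, hΓprj, ?_, ?_⟩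
  · rw [← coe_deck_zpow]
    refine hlt _ _ (.zpow_left (.refl deck) m) hF fun p ↦ ?_
    have hTr := add_intCast_of_deck hdeck m ((deck ^ m).symm (F p))
    rw [← coe_deck_zpow, Homeomorph.apply_symm_apply] at hTr
    linarith [(hdisp p).1]
  · rw [← coe_deck_zpow]
    refine hlt _ _ hF (.zpow_left (.refl deck) n) fun p ↦ ?_
    have hsymm := (hdisp (F.symm ((deck ^ n) p))).2
    rw [F.apply_symm_apply, coe_deck_zpow, add_intCast_of_deck hdeck] at hsymm
    rw [coe_deck_zpow]
    linarith

/-- Lemma 5.4: if `Rot_weak(F) ⊆ [-q+2, q-2]` for some `q ≥ 2`, then there exists an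
oriented essential line `γ = prj ∘ Γ` in 𝔸 joining S to N, lifting to an essential line
`Γ` in ℝ² with `T^{-q}(Γ) < F(Γ) < T^{q}(Γ)`. -/
theorem bounded_weak_rotation_set_line
    (f : Ann ≃ₜ Ann) (F : Plane ≃ₜ Plane)
    (hiso : IsotopicToId f) (hint : IntersectionProperty f) (hlift : IsLift f F)
    (q : ℕ) (hq : 2 ≤ q)
    (hsub : RotWeak ⇑F ⊆ Set.Icc (((-(q : ℝ) + 2 : ℝ)) : EReal) ((((q : ℝ) - 2 : ℝ)) : EReal)) :
    ∃ Γ : ℝ → Plane, IsEssLinePlane Γ ∧ IsEssLineAnnSN (prj ∘ Γ) ∧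
      lineLT (Tr (-(q : ℤ)) '' Set.range Γ) (⇑F '' Set.range Γ) ∧
      lineLT (⇑F '' Set.range Γ) (Tr (q : ℤ) '' Set.range Γ) := by
  have hq' : (2 : ℝ) ≤ q := mod_cast hq
  exact bounded_weak_rotation_set_line_general F (commute_deck_of_isotopicToId hiso hlift)
    (by linarith) hsub (by push_cast; linarith) (by push_cast; linarith)
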